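/- Let Q(z,z̄) be a real-valued polynomial function on ℂⁿ, homogeneous of total degree d ≥ 2 in (z,z̄), with no pluriharmonic terms, such that the model hypersurface M_Q = {(z,w) ∈ ℂⁿ×ℂ : Im w = Q(z,z̄)} is holomorphically nondegenerate. Suppose g₁ ≠ {0} and that M_Q admits no nonzero real diagonal rotation, i.e. no nonzero rotation X = Σ_{j,k} a_{jk} z_k ∂/∂z_j whose matrix (a_{jk}) is diagonalizable over ℂ with all eigenvalues real. Then g_c = {0}. -/

import Mathlib

open Complex

noncomputable section

/-- `QEval c z = Σ_{α,β} c_{αβ} z^α z̄^β`, the real-valued polynomial with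
coefficient family `c`. -/
def QEval {n : ℕ} (c : ((Fin n →₀ ℕ) × (Fin n →₀ ℕ)) →₀ ℂ) (z : Fin n → ℂ) : ℂ :=
  c.sum fun p a => a * (∏ j, z j ^ p.1 j) * ∏ j, (starRingEnd ℂ) (z j) ^ p.2 j

/-- The holomorphic partial derivative `∂Q/∂z_k` of `QEval c`. -/
def QDeriv {n : ℕ} (c : ((Fin n →₀ ℕ) × (Fin n →₀ ℕ)) →₀ ℂ) (k : Fin n) (z : Fin n → ℂ) : ℂ :=
  c.sum fun p a =>
    a * (p.1 k : ℂ) * (∏ j, z j ^ (((p.1 - Finsupp.single k 1) : Fin n →₀ ℕ) j)) *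
      ∏ j, (starRingEnd ℂ) (z j) ^ p.2 j

/-- Holomorphic nondegeneracy of `M_Q = {Im w = Q(z,z̄)}`: the only polynomial
vector field `Σ F_j ∂/∂z_j + G ∂/∂w` tangent to `M_Q` in the strong (holomorphic)
sense is zero. -/
def HND {n : ℕ} (c : ((Fin n →₀ ℕ) × (Fin n →₀ ℕ)) →₀ ℂ) : Prop :=
  ∀ (F : Fin n → MvPolynomial (Fin (n + 1)) ℂ) (G : MvPolynomial (Fin (n + 1)) ℂ),
    (∀ (z : Fin n → ℂ) (u : ℝ),
      MvPolynomial.eval (Fin.snoc z ((u : ℂ) + Complex.I * QEval c z)) G / (2 * Complex.I) -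
        ∑ j, MvPolynomial.eval (Fin.snoc z ((u : ℂ) + Complex.I * QEval c z)) (F j) * QDeriv c j z
          = 0) →
    (∀ j, F j = 0) ∧ G = 0

/-- `Σ F_j ∂/∂z_j + G ∂/∂w` is an infinitesimal CR automorphism of `M_Q`. -/
def IsInfCRQ {n : ℕ} (c : ((Fin n →₀ ℕ) × (Fin n →₀ ℕ)) →₀ ℂ)
    (F : Fin n → MvPolynomial (Fin (n + 1)) ℂ) (G : MvPolynomial (Fin (n + 1)) ℂ) : Prop :=
  ∀ (z : Fin n → ℂ) (u : ℝ),
    (MvPolynomial.eval (Fin.snoc z ((u : ℂ) + Complex.I * QEval c z)) G / (2 * Complex.I) -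
      ∑ j, MvPolynomial.eval (Fin.snoc z ((u : ℂ) + Complex.I * QEval c z)) (F j) * QDeriv c j z).re
        = 0

/-- The linear field `Σ_{j,k} A_{jk} z_k ∂/∂z_j` is a rotation of `M_Q`. -/
def IsRotationQ {n : ℕ} (c : ((Fin n →₀ ℕ) × (Fin n →₀ ℕ)) →₀ ℂ)
    (A : Matrix (Fin n) (Fin n) ℂ) : Prop :=
  ∀ z : Fin n → ℂ, (∑ j, (∑ k, A j k * z k) * QDeriv c j z).re = 0

/-- The weight of the monomial vector field `z^δ w^m ∂/∂z_j` (with `z_j` of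
weight `1/d` and `w` of weight `1`), for an exponent `m : Fin (n+1) →₀ ℕ`. -/
def wZ (n d : ℕ) (m : Fin (n + 1) →₀ ℕ) : ℚ :=
  (∑ i : Fin n, (m i.castSucc : ℚ)) / (d : ℚ) + (m (Fin.last n) : ℚ) - 1 / (d : ℚ)

/-- The weight of the monomial vector field `z^δ w^m ∂/∂w`. -/
def wW (n d : ℕ) (m : Fin (n + 1) →₀ ℕ) : ℚ :=
  (∑ i : Fin n, (m i.castSucc : ℚ)) / (d : ℚ) + (m (Fin.last n) : ℚ) - 1

/-- The graded component `g_μ`: infinitesimal CR automorphisms of `M_Q` all of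
whose monomial terms have weight `μ`. -/
def gwQ (n d : ℕ) (c : ((Fin n →₀ ℕ) × (Fin n →₀ ℕ)) →₀ ℂ) (μ : ℚ) :
    Set ((Fin n → MvPolynomial (Fin (n + 1)) ℂ) × MvPolynomial (Fin (n + 1)) ℂ) :=
  {Xf | IsInfCRQ c Xf.1 Xf.2 ∧ (∀ j, ∀ m ∈ (Xf.1 j).support, wZ n d m = μ) ∧
    ∀ m ∈ Xf.2.support, wW n d m = μ}

/-- `A` is diagonalizable over `ℂ` with all eigenvalues real. -/
def ReDiag {n : ℕ} (A : Matrix (Fin n) (Fin n) ℂ) : Prop :=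
  ∃ (Pm : Matrix (Fin n) (Fin n) ℂ) (dv : Fin n → ℂ),
    IsUnit Pm ∧ A * Pm = Pm * Matrix.diagonal dv ∧ ∀ j, (dv j).im = 0

namespace CRModel

open MvPolynomial Module.End

/-! ### Generalized eigenspaces of derivations -/

section Derivations

variable {A : Type*} [CommRing A] [Algebra ℂ A]

lemma pow_sub_mul_eq_zero (T : Derivation ℂ A A) (a b : ℂ) :
    ∀ (k l : ℕ) (x y : A),
      (((T : A →ₗ[ℂ] A) - a • (1 : Module.End ℂ A)) ^ k) x = 0 →
      (((T : A →ₗ[ℂ] A) - b • (1 : Module.End ℂ A)) ^ l) y = 0 →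
      (((T : A →ₗ[ℂ] A) - (a + b) • (1 : Module.End ℂ A)) ^ (k + l)) (x * y) = 0
  | 0, l, x, y, hx, _ => by
      have : x = 0 := by simpa using hx
      simp [this]
  | k + 1, 0, x, y, _, hy => by
      have : y = 0 := by simpa using hy
      simp [this]
  | k + 1, l + 1, x, y, hx, hy => by
      have h1 := pow_sub_mul_eq_zero T a b k (l + 1)
        (((T : A →ₗ[ℂ] A) - a • (1 : Module.End ℂ A)) x) y (by rwa [pow_succ] at hx) hy
      have h2 := pow_sub_mul_eq_zero T a b (k + 1) l x
        (((T : A →ₗ[ℂ] A) - b • (1 : Module.End ℂ A)) y) hx (by rwa [pow_succ] at hy)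
      have h3 : ((T : A →ₗ[ℂ] A) - (a + b) • (1 : Module.End ℂ A)) (x * y) =
          ((T : A →ₗ[ℂ] A) - a • (1 : Module.End ℂ A)) x * y +
          x * ((T : A →ₗ[ℂ] A) - b • (1 : Module.End ℂ A)) y := by
        simp only [LinearMap.sub_apply, LinearMap.smul_apply, Module.End.one_apply,
          Derivation.coeFn_coe, Derivation.leibniz, smul_eq_mul]
        simp only [Algebra.smul_def, map_add]
        ring
      rw [show k + 1 + (l + 1) = (k + (l + 1)) + 1 by ring, pow_succ, Module.End.mul_apply, h3,
        map_add, h1, show k + (l + 1) = k + 1 + l by ring, h2, add_zero]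

lemma mul_mem_maxGenEigenspace (T : Derivation ℂ A A) {a b : ℂ} {x y : A}
    (hx : x ∈ maxGenEigenspace (T : A →ₗ[ℂ] A) a) (hy : y ∈ maxGenEigenspace (T : A →ₗ[ℂ] A) b) :
    x * y ∈ maxGenEigenspace (T : A →ₗ[ℂ] A) (a + b) := by
  rw [mem_maxGenEigenspace] at *
  obtain ⟨k, hk⟩ := hx
  obtain ⟨l, hl⟩ := hy
  exact ⟨k + l, pow_sub_mul_eq_zero T a b k l x y hk hl⟩

lemma mul_mem_eigenspace (S : Derivation ℂ A A) {a b : ℂ} {x y : A}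
    (hx : x ∈ eigenspace (S : A →ₗ[ℂ] A) a) (hy : y ∈ eigenspace (S : A →ₗ[ℂ] A) b) :
    x * y ∈ eigenspace (S : A →ₗ[ℂ] A) (a + b) := by
  rw [mem_eigenspace_iff] at *
  simp only [Derivation.coeFn_coe, Derivation.leibniz, smul_eq_mul] at *
  rw [hx, hy, add_smul, mul_smul_comm, mul_smul_comm, mul_comm y x, add_comm]

lemma mem_eigenspace_zero {T : Module.End ℂ A} {x : A} (h : T x = 0) : x ∈ eigenspace T 0 := by
  rw [mem_eigenspace_iff, h, zero_smul]

/-- A multiplicative family of subspaces of a polynomial ring whose span contains the variables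
spans the whole ring. -/
lemma iSup_eq_top_of_X_mem {σ : Type*} (W : ℂ → Submodule ℂ (MvPolynomial σ ℂ))
    (h1 : 1 ∈ W 0) (hmul : ∀ a b x y, x ∈ W a → y ∈ W b → x * y ∈ W (a + b))
    (hX : ∀ i, X i ∈ ⨆ a, W a) : ⨆ a, W a = ⊤ := by
  have hm : ∀ x ∈ ⨆ a, W a, ∀ y ∈ ⨆ a, W a, x * y ∈ ⨆ a, W a := by
    intro x hx y hy
    induction hx using Submodule.iSup_induction' with
    | mem a x hx =>
      induction hy using Submodule.iSup_induction' with
      | mem b y hy => exact Submodule.mem_iSup_of_mem (a + b) (hmul a b x y hx hy)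
      | zero => simp
      | add y y' _ _ h h' => rw [mul_add]; exact add_mem h h'
    | zero => simp
    | add x x' _ _ h h' => rw [add_mul]; exact add_mem h h'
  rw [eq_top_iff]
  intro p _
  induction p using MvPolynomial.induction_on with
  | C r =>
    rw [C_eq_smul_one]
    exact Submodule.smul_mem _ _ (Submodule.mem_iSup_of_mem 0 h1)
  | add p q hp hq => exact add_mem (hp trivial) (hq trivial)
  | mul_X p i hp => exact hm _ (hp trivial) _ (hX i)

/-- A spanning refinement of an independent family of subspaces is the family itself. -/
lemma le_of_iSup_eq_top {ι V : Type*} [AddCommGroup V] [Module ℂ V] {W U : ι → Submodule ℂ V}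
    (hWU : ∀ i, W i ≤ U i) (hU : iSupIndep U) (hW : ⨆ i, W i = ⊤) (i : ι) : U i ≤ W i := by
  intro x hx
  have hx' : x ∈ W i ⊔ ⨆ j, ⨆ (_ : j ≠ i), U j := by
    have h : (⊤ : Submodule ℂ V) ≤ W i ⊔ ⨆ j, ⨆ (_ : j ≠ i), U j := by
      rw [← hW]
      refine iSup_le fun j => ?_
      by_cases hj : j = i
      · subst hj; exact le_sup_left
      · exact (hWU j).trans ((le_iSup₂ (f := fun j (_ : j ≠ i) => U j) j hj).trans le_sup_right)
    exact h trivial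
  obtain ⟨y, hy, z, hz, rfl⟩ := Submodule.mem_sup.1 hx'
  have hz0 : z = 0 := by
    refine Submodule.disjoint_def.1 (hU i) z ?_ hz
    simpa using sub_mem hx (hWU i hy)
  simpa [hz0] using hy

lemma map_mem_maxGenEigenspace {V V' : Type*} [AddCommGroup V] [Module ℂ V] [AddCommGroup V']
    [Module ℂ V'] (B : Module.End ℂ V) (T : Module.End ℂ V') (φ : V →ₗ[ℂ] V')
    (h : ∀ v, T (φ v) = φ (B v)) {a : ℂ} {v : V} (hv : v ∈ maxGenEigenspace B a) :
    φ v ∈ maxGenEigenspace T a := by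
  rw [mem_maxGenEigenspace] at *
  obtain ⟨k, hk⟩ := hv
  refine ⟨k, ?_⟩
  have : ∀ (k : ℕ) (v : V), ((T - a • (1 : Module.End ℂ V')) ^ k) (φ v) =
      φ (((B - a • (1 : Module.End ℂ V)) ^ k) v) := by
    intro k
    induction k with
    | zero => simp
    | succ k ih =>
      intro v
      rw [pow_succ, pow_succ, Module.End.mul_apply, Module.End.mul_apply, ← ih]
      simp [h]
  rw [this, hk, map_zero]

/-- The extreme term of the iterated Leibniz rule. -/
lemma exists_iterate_mul (N : Derivation ℂ A A) :
    ∀ (k l : ℕ) (x y : A), N^[k + 1] x = 0 → N^[l + 1] y = 0 →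
      ∃ C : ℕ, 0 < C ∧ N^[k + l] (x * y) = C • (N^[k] x * N^[l] y)
  | 0, 0, x, y, _, _ => ⟨1, one_pos, by simp⟩
  | 0, l + 1, x, y, hx, hy => by
      obtain ⟨C, hC, h⟩ := exists_iterate_mul N 0 l x (N y) hx
        (by rwa [Function.iterate_succ_apply] at hy)
      have hx' : N x = 0 := hx
      refine ⟨C, hC, ?_⟩
      rw [← add_assoc, Function.iterate_succ_apply, Derivation.leibniz, hx', smul_zero, add_zero,
        smul_eq_mul, h, Function.iterate_succ_apply]
  | k + 1, 0, x, y, hx, hy => by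
      obtain ⟨C, hC, h⟩ := exists_iterate_mul N k 0 (N x) y
        (by rwa [Function.iterate_succ_apply] at hx) hy
      have hy' : N y = 0 := hy
      refine ⟨C, hC, ?_⟩
      rw [add_zero] at h ⊢
      rw [Function.iterate_succ_apply, Derivation.leibniz, hy', smul_zero,
        zero_add, smul_eq_mul, mul_comm, h, Function.iterate_succ_apply]
  | k + 1, l + 1, x, y, hx, hy => by
      obtain ⟨C, hC, h⟩ := exists_iterate_mul N k (l + 1) (N x) y
        (by rwa [Function.iterate_succ_apply] at hx) hy
      obtain ⟨C', hC', h'⟩ := exists_iterate_mul N (k + 1) l x (N y) hx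
        (by rwa [Function.iterate_succ_apply] at hy)
      refine ⟨C' + C, by omega, ?_⟩
      rw [show k + 1 + (l + 1) = (k + 1 + l) + 1 by ring, Function.iterate_succ_apply,
        Derivation.leibniz, smul_eq_mul, smul_eq_mul, iterate_map_add, h',
        show k + 1 + l = k + (l + 1) by ring, mul_comm y, h, add_smul]
      simp only [Function.iterate_succ_apply]

/-- If `N` commutes with `D` and `D q = -2i q N q`, then the generalized eigencomponents of `q`
for nonzero eigenvalues of `N` vanish. -/
lemma mem_maxGenEigenspace_zero [IsDomain A] (N D : Derivation ℂ A A)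
    (hcomm : ∀ x, N (D x) = D (N x))
    (htop : ⨆ a, maxGenEigenspace (N : A →ₗ[ℂ] A) a = ⊤) (q : A)
    (hq : D q = (-I) • N (q * q)) : q ∈ maxGenEigenspace (N : A →ₗ[ℂ] A) 0 := by
  set U := maxGenEigenspace (N : A →ₗ[ℂ] A) with hU
  have hind : iSupIndep U := independent_maxGenEigenspace _
  have hDmem : ∀ a x, x ∈ U a → D x ∈ U a := fun a x hx =>
    map_mem_maxGenEigenspace _ _ (D : A →ₗ[ℂ] A) (fun v => hcomm v) hx
  have hNmem : ∀ a x, x ∈ U a → N x ∈ U a := fun a x hx =>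
    map_mem_maxGenEigenspace _ _ (N : A →ₗ[ℂ] A) (fun v => rfl) hx
  obtain ⟨f, hf, hfq⟩ := (Submodule.mem_iSup_iff_exists_finsupp U q).1 (by rw [htop]; trivial)
  by_cases hS : ∀ a ∈ f.support, a = 0
  · rw [← hfq]
    refine sum_mem fun a ha => ?_
    have := hf a
    rwa [hS a ha] at this ⊢
  push Not at hS
  obtain ⟨a₀, ha₀, ha₀'⟩ := hS
  obtain ⟨b, hb, hmax⟩ := Finset.exists_max_image f.support (fun a => ‖a‖) ⟨a₀, ha₀⟩
  have hb0 : b ≠ 0 := by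
    intro h
    have := hmax a₀ ha₀
    simp [h] at this
    exact ha₀' this
  set V := ⨆ j, ⨆ (_ : j ≠ b + b), U j with hV
  have hmemV : ∀ a x, a ≠ b + b → x ∈ U a → x ∈ V := fun a x ha hx =>
    Submodule.mem_iSup_of_mem a (Submodule.mem_iSup_of_mem ha hx)
  have hbb : ‖b‖ < ‖b + b‖ := by
    rw [← two_mul, norm_mul]; have := norm_pos_iff.2 hb0; simp; linarith
  have hD : D q ∈ V := by
    rw [← hfq, Finsupp.sum, map_sum]
    refine sum_mem fun a ha => hmemV a _ ?_ (hDmem _ _ (hf a))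
    rintro rfl
    exact absurd (hmax _ ha) (not_le.2 hbb)
  have hsplit : N (q * q) - N (f b * f b) ∈ V := by
    have : q * q - f b * f b =
        ∑ p ∈ (f.support ×ˢ f.support).erase (b, b), f p.1 * f p.2 := by
      rw [← hfq, Finsupp.sum, Finset.sum_mul_sum, ← Finset.sum_product',
        ← Finset.add_sum_erase _ _ (Finset.mem_product.2 ⟨hb, hb⟩ : (b, b) ∈ _)]
      simp
    rw [← map_sub, this, map_sum]
    refine sum_mem fun p hp => ?_
    obtain ⟨hne, hp⟩ := Finset.mem_erase.1 hp
    obtain ⟨h1, h2⟩ := Finset.mem_product.1 hp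
    refine hmemV (p.1 + p.2) _ ?_ (hNmem _ _ (mul_mem_maxGenEigenspace N (hf _) (hf _)))
    intro hsum
    have e1 := hmax _ h1
    have e2 := hmax _ h2
    have hpar := parallelogram_law_with_norm ℝ p.1 p.2
    have hnn : ‖p.1 + p.2‖ = 2 * ‖b‖ := by rw [hsum, ← two_mul, norm_mul]; simp
    have hz : ‖p.1 - p.2‖ = 0 := by
      have := norm_nonneg (p.1 - p.2)
      have := norm_nonneg p.1
      have := norm_nonneg p.2
      rw [hnn] at hpar
      nlinarith
    have heq : p.1 = p.2 := sub_eq_zero.1 (norm_eq_zero.1 hz)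
    rw [heq, ← two_mul, ← two_mul] at hsum
    have h2b := mul_left_cancel₀ two_ne_zero hsum
    exact hne (Prod.ext (heq.trans h2b) h2b)
  have hN : N (f b * f b) ∈ V := by
    have h1 : N (q * q) ∈ V := by
      have : N (q * q) = I • D q := by rw [hq, smul_smul]; simp
      rw [this]; exact Submodule.smul_mem _ _ hD
    simpa using sub_mem h1 hsplit
  have hUb : f b * f b ∈ U (b + b) := mul_mem_maxGenEigenspace N (hf _) (hf _)
  have hN0 : N (f b * f b) = 0 := Submodule.disjoint_def.1 (hind (b + b)) _ (hNmem _ _ hUb) hN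
  have h0 : f b * f b ∈ V := hmemV 0 _ (by rw [← two_mul]; simpa [eq_comm] using hb0)
    (eigenspace_le_maxGenEigenspace (mem_eigenspace_zero hN0))
  have hz := Submodule.disjoint_def.1 (hind (b + b)) _ hUb h0
  exact absurd (mul_self_eq_zero.1 hz) (Finsupp.mem_support_iff.1 hb)

end Derivations

/-! ### The polarized polynomial ring -/

section Polarization

variable {n : ℕ}

/-- Polynomials in `z` and an independent copy of `z̄`. -/
abbrev Pol (n : ℕ) : Type := MvPolynomial (Fin n ⊕ Fin n) ℂ

/-- Holomorphic polynomials in `z`. -/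
abbrev Hol (n : ℕ) : Type := MvPolynomial (Fin n) ℂ

/-- The point `(z, z̄)`. -/
def diagPt (z : Fin n → ℂ) : Fin n ⊕ Fin n → ℂ := Sum.elim z fun j => (starRingEnd ℂ) (z j)

lemma eq_zero_of_eval_diagPt (P : Pol n) (h : ∀ z, eval (diagPt z) P = 0) : P = 0 := by
  let φ : Pol n →ₐ[ℂ] Pol n := aeval (Sum.elim (fun j => X (Sum.inl j) + C I * X (Sum.inr j))
    fun j => X (Sum.inl j) - C I * X (Sum.inr j))
  let ψ : Pol n →ₐ[ℂ] Pol n := aeval (Sum.elim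
    (fun j => C (1 / 2) * (X (Sum.inl j) + X (Sum.inr j)))
    fun j => C (-I / 2) * (X (Sum.inl j) - X (Sum.inr j)))
  have hψφ : ψ.comp φ = AlgHom.id ℂ _ := by
    have hI : (C I : Pol n) * C (-I / 2) = C (1 / 2) := by
      rw [← C_mul]; congr 1; ring_nf; simp; norm_num
    have h2 : (C (1 / 2) : Pol n) + C (1 / 2) = 1 := by
      rw [← C_add, ← C_1]; norm_num
    have hC : ∀ r, ψ (C r) = C r := fun r => ψ.commutes r
    refine MvPolynomial.algHom_ext fun i => ?_
    rcases i with j | j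
    · simp only [AlgHom.comp_apply, φ, aeval_X, Sum.elim_inl, map_add, map_mul, hC]
      simp only [ψ, aeval_X, Sum.elim_inl, Sum.elim_inr, ← mul_assoc, hI, AlgHom.id_apply]
      linear_combination (X (Sum.inl j)) * h2
    · simp only [AlgHom.comp_apply, φ, aeval_X, Sum.elim_inr, map_sub, map_mul, hC]
      simp only [ψ, aeval_X, Sum.elim_inl, Sum.elim_inr, ← mul_assoc, hI, AlgHom.id_apply]
      linear_combination (X (Sum.inr j)) * h2
  have hφ : φ P = 0 := by
    refine funext_set (s := fun _ => Set.range ((↑) : ℝ → ℂ))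
      (fun _ => Set.infinite_range_of_injective Complex.ofReal_injective) fun x hx => ?_
    have hx' : ∀ i, (starRingEnd ℂ) (x i) = x i := fun i => by
      obtain ⟨r, hr⟩ := hx i trivial
      rw [← hr, Complex.conj_ofReal]
    rw [map_zero, ← h fun j => x (Sum.inl j) + I * x (Sum.inr j)]
    change (eval x) (aeval _ P) = _
    rw [← coe_aeval_eq_eval, ← coe_aeval_eq_eval]
    simp only [RingHom.coe_coe]
    rw [← AlgHom.comp_apply, comp_aeval]
    congr 2
    ext i
    rcases i with j | j
    · simp [diagPt]
    · simp [diagPt, hx', sub_eq_add_neg]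
  have := congrArg (fun f => f P) hψφ
  simpa [AlgHom.comp_apply, hφ] using this.symm

/-- The conjugation of `Pol n` exchanging `z` and `z̄`. -/
def cj : Pol n →+* Pol n :=
  (rename Sum.swap : Pol n →ₐ[ℂ] Pol n).toRingHom.comp (map (starRingEnd ℂ))

lemma cj_C (r : ℂ) : cj (C r : Pol n) = C ((starRingEnd ℂ) r) := by simp [cj]

lemma cj_X (i : Fin n ⊕ Fin n) : cj (X i : Pol n) = X i.swap := by simp [cj]

lemma cj_smul (r : ℂ) (P : Pol n) : cj (r • P) = (starRingEnd ℂ) r • cj P := by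
  rw [smul_eq_C_mul, map_mul, cj_C, smul_eq_C_mul]

lemma cj_cj (P : Pol n) : cj (cj P) = P := by
  induction P using MvPolynomial.induction_on with
  | C r => simp [cj_C]
  | add p q hp hq => simp [hp, hq]
  | mul_X p i hp => simp [hp, cj_X]

lemma eval_cj (z : Fin n → ℂ) (P : Pol n) :
    eval (diagPt z) (cj P) = (starRingEnd ℂ) (eval (diagPt z) P) := by
  induction P using MvPolynomial.induction_on with
  | C r => simp [cj_C]
  | add p q hp hq => simp [hp, hq]
  | mul_X p i hp =>
    rw [map_mul, map_mul, map_mul, map_mul, hp, cj_X, eval_X, eval_X]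
    rcases i with j | j <;> simp [diagPt]

lemma add_cj_eq_zero_of_re (P : Pol n) (h : ∀ z, (eval (diagPt z) P).re = 0) : P + cj P = 0 := by
  refine eq_zero_of_eval_diagPt _ fun z => ?_
  rw [map_add, eval_cj, Complex.add_conj, h z]
  simp

lemma mem_support_cj {P : Pol n} {m : Fin n ⊕ Fin n →₀ ℕ} (hm : m ∈ (cj P).support) :
    ∃ m' ∈ P.support, m = m'.mapDomain Sum.swap := by
  classical
  have : (cj P).support = ((map (starRingEnd ℂ) P).support).image (Finsupp.mapDomain Sum.swap) :=
    support_rename_of_injective Sum.swap_leftInverse.injective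
  rw [this, Finset.mem_image] at hm
  obtain ⟨m', hm', rfl⟩ := hm
  exact ⟨m', support_map_subset _ _ hm', rfl⟩

/-- The holomorphic field `Σ F_j ∂/∂z_j` as a derivation of `Pol n`. -/
def hField (F : Fin n → Hol n) : Derivation ℂ (Pol n) (Pol n) :=
  mkDerivation ℂ (Sum.elim (fun j => rename Sum.inl (F j)) 0)

/-- The conjugate field `Σ F̄_j ∂/∂z̄_j` as a derivation of `Pol n`. -/
def aField (F : Fin n → Hol n) : Derivation ℂ (Pol n) (Pol n) :=
  mkDerivation ℂ (Sum.elim 0 fun j => cj (rename Sum.inl (F j)))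

/-- The Lie bracket of polynomial holomorphic vector fields. -/
def br (F G : Fin n → Hol n) : Fin n → Hol n := fun j =>
  mkDerivation ℂ F (G j) - mkDerivation ℂ G (F j)

lemma hField_X_inl (F : Fin n → Hol n) (j : Fin n) :
    hField F (X (Sum.inl j)) = rename Sum.inl (F j) := by simp [hField, mkDerivation_X]

lemma hField_X_inr (F : Fin n → Hol n) (j : Fin n) : hField F (X (Sum.inr j)) = 0 := by
  simp [hField, mkDerivation_X]

lemma aField_X_inl (F : Fin n → Hol n) (j : Fin n) : aField F (X (Sum.inl j)) = 0 := by
  simp [aField, mkDerivation_X]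

lemma aField_X_inr (F : Fin n → Hol n) (j : Fin n) :
    aField F (X (Sum.inr j)) = cj (rename Sum.inl (F j)) := by simp [aField, mkDerivation_X]

lemma aField_cj (F : Fin n → Hol n) (P : Pol n) : aField F (cj P) = cj (hField F P) := by
  induction P using MvPolynomial.induction_on with
  | C r => simp [cj_C]
  | add p q hp hq => simp [hp, hq]
  | mul_X p i hp =>
    rcases i with j | j
    · simp [hp, cj_X, Derivation.leibniz, hField_X_inl, aField_X_inr]
    · simp [hp, cj_X, Derivation.leibniz, hField_X_inr, aField_X_inl]

lemma hField_cj (F : Fin n → Hol n) (P : Pol n) : hField F (cj P) = cj (aField F P) := by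
  rw [← cj_cj (hField F (cj P)), ← aField_cj, cj_cj]

lemma hField_rename (F : Fin n → Hol n) (p : Hol n) :
    hField F (rename Sum.inl p) = rename Sum.inl (mkDerivation ℂ F p) := by
  induction p using MvPolynomial.induction_on with
  | C r => simp
  | add p q hp hq => simp [hp, hq]
  | mul_X p i hp => simp [hp, Derivation.leibniz, hField_X_inl, mkDerivation_X]

lemma aField_rename (F : Fin n → Hol n) (p : Hol n) :
    aField F (rename Sum.inl p) = 0 := by
  induction p using MvPolynomial.induction_on with
  | C r => simp
  | add p q hp hq => simp [hp, hq]
  | mul_X p i hp => simp [hp, Derivation.leibniz, aField_X_inl]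

lemma hField_br (F G : Fin n → Hol n) (P : Pol n) :
    hField (br F G) P = hField F (hField G P) - hField G (hField F P) := by
  rw [← Derivation.commutator_apply]
  congr 1
  refine derivation_ext fun i => ?_
  rcases i with j | j
  · simp [Derivation.commutator_apply, hField_X_inl, hField_rename, br]
  · simp [Derivation.commutator_apply, hField_X_inr]

lemma aField_br (F G : Fin n → Hol n) (P : Pol n) :
    aField (br F G) P = aField F (aField G P) - aField G (aField F P) := by
  rw [← cj_cj P]
  simp only [aField_cj, hField_br, map_sub]

lemma hField_aField (F G : Fin n → Hol n) (P : Pol n) :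
    hField F (aField G P) = aField G (hField F P) := by
  rw [← sub_eq_zero, ← Derivation.commutator_apply]
  have : ⁅hField F, aField G⁆ = 0 := by
    refine derivation_ext fun i => ?_
    rcases i with j | j
    · simp [Derivation.commutator_apply, hField_X_inl, aField_X_inl, aField_rename]
    · simp only [Derivation.commutator_apply, hField_X_inr, aField_X_inr, hField_cj, aField_rename,
        map_zero, sub_zero, Derivation.zero_apply]
  rw [this, Derivation.zero_apply]

lemma mkDerivation_eq_sum {σ : Type*} [Fintype σ] (F : σ → MvPolynomial σ ℂ)
    (P : MvPolynomial σ ℂ) : mkDerivation ℂ F P = ∑ i, F i * pderiv i P := by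
  have h : mkDerivation ℂ F = ∑ i, F i • pderiv (R := ℂ) i := by
    classical
    refine derivation_ext fun i => ?_
    rw [← Derivation.coeFnAddMonoidHom_apply (∑ j, _), map_sum, Finset.sum_apply]
    simp [mkDerivation_X, pderiv_X, Pi.single_apply]
  rw [h, ← Derivation.coeFnAddMonoidHom_apply (∑ j, _), map_sum, Finset.sum_apply]
  simp

lemma hField_eq_sum (F : Fin n → Hol n) (P : Pol n) :
    hField F P = ∑ j, rename Sum.inl (F j) * pderiv (Sum.inl j) P := by
  rw [hField, mkDerivation_eq_sum, Fintype.sum_sum_type]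
  simp

/-! ### Bidegrees -/

/-- The degree of an exponent in the `z` variables. -/
def zdeg (m : Fin n ⊕ Fin n →₀ ℕ) : ℕ := ∑ j, m (Sum.inl j)

/-- The degree of an exponent in the `z̄` variables. -/
def adeg (m : Fin n ⊕ Fin n →₀ ℕ) : ℕ := ∑ j, m (Sum.inr j)

lemma zdeg_add (m m' : Fin n ⊕ Fin n →₀ ℕ) : zdeg (m + m') = zdeg m + zdeg m' := by
  simp [zdeg, Finset.sum_add_distrib]

lemma adeg_add (m m' : Fin n ⊕ Fin n →₀ ℕ) : adeg (m + m') = adeg m + adeg m' := by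
  simp [adeg, Finset.sum_add_distrib]

lemma zdeg_nsmul (k : ℕ) (m : Fin n ⊕ Fin n →₀ ℕ) : zdeg (k • m) = k * zdeg m := by
  simp [zdeg, Finset.mul_sum]

lemma mapDomain_swap_apply (m : Fin n ⊕ Fin n →₀ ℕ) (i : Fin n ⊕ Fin n) :
    m.mapDomain Sum.swap i = m i.swap := by
  conv_lhs => rw [← Sum.swap_swap i]
  exact Finsupp.mapDomain_apply Sum.swap_leftInverse.injective _ _

lemma zdeg_swap (m : Fin n ⊕ Fin n →₀ ℕ) : zdeg (m.mapDomain Sum.swap) = adeg m := by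
  simp [zdeg, adeg, mapDomain_swap_apply]

lemma adeg_swap (m : Fin n ⊕ Fin n →₀ ℕ) : adeg (m.mapDomain Sum.swap) = zdeg m := by
  simp [zdeg, adeg, mapDomain_swap_apply]

lemma zdeg_mapDomain_inl (e : Fin n →₀ ℕ) : zdeg (e.mapDomain Sum.inl) = e.degree := by
  simp [zdeg, Finsupp.mapDomain_apply Sum.inl_injective, Finsupp.degree_eq_sum]

lemma adeg_mapDomain_inl (e : Fin n →₀ ℕ) : adeg (e.mapDomain Sum.inl) = 0 := by
  simp only [adeg]
  refine Finset.sum_eq_zero fun j _ => Finsupp.mapDomain_of_notMem_range _ _ (by simp)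

lemma mem_support_hField {F : Fin n → Hol n} {s : ℕ} (hF : ∀ j, (F j).IsHomogeneous s)
    {P : Pol n} {m' : Fin n ⊕ Fin n →₀ ℕ} (hm' : m' ∈ (hField F P).support) :
    ∃ m ∈ P.support, 1 ≤ zdeg m ∧ zdeg m' + 1 = zdeg m + s ∧ adeg m' = adeg m := by
  classical
  rw [hField_eq_sum] at hm'
  obtain ⟨j, -, hj⟩ := Finset.mem_biUnion.1 (support_sum hm')
  obtain ⟨m₁, h₁, m₂, h₂, rfl⟩ := Finset.mem_add.1 (support_mul _ _ hj)
  rw [support_rename_of_injective Sum.inl_injective, Finset.mem_image] at h₁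
  obtain ⟨e, he, rfl⟩ := h₁
  have hs : e.degree = s := by
    rw [Finsupp.degree_eq_weight_one]
    exact hF j (mem_support_iff.1 he)
  rw [mem_support_iff, coeff_pderiv] at h₂
  have hz : zdeg (Finsupp.single (Sum.inl j) 1 : Fin n ⊕ Fin n →₀ ℕ) = 1 := by
    simp [zdeg, Finsupp.single_apply]
  have ha : adeg (Finsupp.single (Sum.inl j) 1 : Fin n ⊕ Fin n →₀ ℕ) = 0 := by
    simp [adeg]
  refine ⟨m₂ + Finsupp.single (Sum.inl j) 1, mem_support_iff.2 (left_ne_zero_of_mul h₂), ?_⟩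
  rw [zdeg_add, zdeg_add, adeg_add, adeg_add, zdeg_mapDomain_inl, adeg_mapDomain_inl, hz, ha]
  omega

lemma mem_support_aField {F : Fin n → Hol n} {s : ℕ} (hF : ∀ j, (F j).IsHomogeneous s)
    {P : Pol n} {m' : Fin n ⊕ Fin n →₀ ℕ} (hm' : m' ∈ (aField F P).support) :
    ∃ m ∈ P.support, 1 ≤ adeg m ∧ adeg m' + 1 = adeg m + s ∧ zdeg m' = zdeg m := by
  rw [← cj_cj P, aField_cj] at hm'
  obtain ⟨m₁, h₁, rfl⟩ := mem_support_cj hm'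
  obtain ⟨m₂, h₂, h⟩ := mem_support_hField hF h₁
  obtain ⟨m, hm, rfl⟩ := mem_support_cj h₂
  refine ⟨m, hm, ?_⟩
  simpa only [zdeg_swap, adeg_swap] using h

lemma exists_forall_nsmul_mem_support {σ : Type*} [Fintype σ] {P : MvPolynomial σ ℂ}
    (hP : P ≠ 0) : ∃ m ∈ P.support, ∀ k : ℕ, k • m ∈ (P ^ k).support := by
  let _ : LinearOrder σ := LinearOrder.lift' (Fintype.equivFin σ) (Fintype.equivFin σ).injective
  refine ⟨MonomialOrder.lex.degree P, MonomialOrder.degree_mem_support hP, fun k => ?_⟩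
  rw [← MonomialOrder.degree_pow]
  exact MonomialOrder.degree_mem_support (pow_ne_zero _ hP)

end Polarization

/-! ### Rigidity of models under fields of high weight -/

section Rigidity

variable {n : ℕ}

lemma derivation_const_mul (D : Derivation ℂ (Pol n) (Pol n)) (a : ℂ) (P : Pol n) :
    D (C a * P) = C a * D P := by
  rw [← smul_eq_C_mul, D.map_smul, smul_eq_C_mul]

lemma isHomogeneous_mkDerivation {F : Fin n → Hol n} {s t r : ℕ}
    (hF : ∀ j, (F j).IsHomogeneous s) {p : Hol n} (hp : p.IsHomogeneous t) (ht : 1 ≤ t)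
    (hr : s + t = r + 1) : (mkDerivation ℂ F p).IsHomogeneous r := by
  rw [mkDerivation_eq_sum]
  refine IsHomogeneous.sum _ _ _ fun j _ => ?_
  have h := (hF j).mul (hp.pderiv (i := j))
  rwa [show s + (t - 1) = r by omega] at h

lemma isHomogeneous_br {F G : Fin n → Hol n} {s t r : ℕ} (hF : ∀ j, (F j).IsHomogeneous s)
    (hG : ∀ j, (G j).IsHomogeneous t) (hs : 1 ≤ s) (ht : 1 ≤ t) (hr : s + t = r + 1) (j : Fin n) :
    (br F G j).IsHomogeneous r :=
  (isHomogeneous_mkDerivation hF (hG j) ht hr).sub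
    (isHomogeneous_mkDerivation hG (hF j) hs (by omega))

variable {d : ℕ} {Q : Pol n}

lemma eq_zero_of_degree_le
    (hQ : ∀ m ∈ Q.support, 1 ≤ zdeg m ∧ 1 ≤ adeg m ∧ zdeg m + adeg m = d)
    (hnd : ∀ F, hField F Q = 0 → F = 0) {h : Fin n → Hol n} {r : ℕ}
    (hh : ∀ j, (h j).IsHomogeneous r) (hr : d ≤ r) (h0 : hField h Q + aField h Q = 0) : h = 0 := by
  refine hnd h ?_
  rw [← support_eq_empty, Finset.eq_empty_iff_forall_notMem]
  intro m hm
  obtain ⟨m₁, hm₁, h1, h2, -⟩ := mem_support_hField hh hm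
  rw [eq_neg_of_add_eq_zero_left h0, support_neg] at hm
  obtain ⟨m₂, hm₂, -, -, h3⟩ := mem_support_aField hh hm
  have := hQ m₂ hm₂
  omega

/-- The linear field `Σ A_{jk} z_k ∂/∂z_j`. -/
def lin (A : Matrix (Fin n) (Fin n) ℂ) : Fin n → Hol n := fun j => ∑ k, C (A j k) * X k

/-- The linear form `Σ v_j z_j`. -/
def linForm : (Fin n → ℂ) →ₗ[ℂ] Pol n := Fintype.linearCombination ℂ fun j => X (Sum.inl j)

lemma hField_lin_linForm (A : Matrix (Fin n) (Fin n) ℂ) (v : Fin n → ℂ) :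
    hField (lin A) (linForm v) = linForm (Matrix.toLin' A.transpose v) := by
  simp only [linForm, Fintype.linearCombination_apply, map_sum, Derivation.map_smul, hField_X_inl,
    lin, map_mul, rename_C, rename_X, Matrix.toLin'_apply, Matrix.mulVec, dotProduct,
    Matrix.transpose_apply, Finset.sum_smul, Finset.smul_sum]
  rw [Finset.sum_comm]
  refine Finset.sum_congr rfl fun k _ => Finset.sum_congr rfl fun j _ => ?_
  simp only [smul_eq_C_mul, C_mul]
  ring

lemma linForm_single (j : Fin n) : linForm (Pi.single j 1) = X (Sum.inl j) := by
  simp [linForm, Fintype.linearCombination_apply, Pi.single_apply]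

lemma iSup_maxGenEigenspace_hField (A : Matrix (Fin n) (Fin n) ℂ) :
    ⨆ a, maxGenEigenspace (hField (lin A) : Pol n →ₗ[ℂ] Pol n) a = ⊤ := by
  refine iSup_eq_top_of_X_mem _ ?_ (fun a b x y => mul_mem_maxGenEigenspace _) ?_
  · exact eigenspace_le_maxGenEigenspace (mem_eigenspace_zero (by simp))
  rintro (j | j)
  · rw [← linForm_single]
    have hv : (Pi.single j 1 : Fin n → ℂ) ∈
        ⨆ a, maxGenEigenspace (Matrix.toLin' A.transpose) a := by
      rw [iSup_maxGenEigenspace_eq_top]; trivial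
    generalize (Pi.single j 1 : Fin n → ℂ) = v at hv ⊢
    induction hv using Submodule.iSup_induction' with
    | mem a v hv => exact Submodule.mem_iSup_of_mem a (map_mem_maxGenEigenspace _ _ linForm
        (hField_lin_linForm A) hv)
    | zero => simp
    | add v v' _ _ h h' => rw [map_add]; exact add_mem h h'
  · exact Submodule.mem_iSup_of_mem 0 (eigenspace_le_maxGenEigenspace
      (mem_eigenspace_zero (hField_X_inr _ j)))

lemma eq_sum_of_isHomogeneous_one {p : Hol n} (hp : p.IsHomogeneous 1) :
    p = ∑ k, C (coeff (Finsupp.single k 1) p) * X k := by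
  classical
  ext m
  simp only [coeff_sum, coeff_C_mul, coeff_X, mul_ite, mul_one, mul_zero]
  by_cases hm : coeff m p = 0
  · rw [hm]
    symm
    refine Finset.sum_eq_zero fun k _ => ?_
    split_ifs with h
    · rw [h, hm]
    · rfl
  · have h1 : m.degree = 1 := by
      rw [Finsupp.degree_eq_weight_one]; exact hp hm
    obtain ⟨k, rfl⟩ := (Finsupp.sum_eq_one_iff m).1
      (by simpa [Finsupp.degree_apply, Finsupp.sum] using h1)
    rw [Finset.sum_eq_single k]
    · simp
    · intro b _ hb
      rw [if_neg]
      intro h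
      exact hb (Finsupp.single_left_injective one_ne_zero h)
    · simp

lemma exists_eq_lin {g : Fin n → Hol n} (hg : ∀ j, (g j).IsHomogeneous 1) : ∃ A, g = lin A :=
  ⟨fun j k => coeff (Finsupp.single k 1) (g j), funext fun j => eq_sum_of_isHomogeneous_one (hg j)⟩

/-- Along a holomorphic field `g` of degree at least two preserving `Q`, the iterated derivatives
of `Q` eventually vanish. -/
lemma exists_iterate_eq_zero
    (hQ : ∀ m ∈ Q.support, 1 ≤ zdeg m ∧ 1 ≤ adeg m ∧ zdeg m + adeg m = d)
    {g : Fin n → Hol n} {s : ℕ} (hs : 2 ≤ s) (hg : ∀ j, (g j).IsHomogeneous s)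
    (hgQ : hField g Q + aField g Q = 0) : ∃ k, (hField g)^[k] Q = 0 := by
  have hH : ∀ k, ∀ m ∈ ((hField g)^[k] Q).support, adeg m ≤ d ∧
      zdeg m + adeg m = d + k * (s - 1) := by
    intro k
    induction k with
    | zero => intro m hm; have := hQ m hm; omega
    | succ k ih =>
      intro m hm
      rw [Function.iterate_succ_apply'] at hm
      obtain ⟨m', hm', h1, h2, h3⟩ := mem_support_hField hg hm
      have := ih m' hm'
      rw [Nat.succ_mul]
      omega
  have hA : ∀ k, ∀ m ∈ ((aField g)^[k] Q).support, zdeg m ≤ d := by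
    intro k
    induction k with
    | zero => intro m hm; have := hQ m hm; omega
    | succ k ih =>
      intro m hm
      rw [Function.iterate_succ_apply'] at hm
      obtain ⟨m', hm', h1, h2, h3⟩ := mem_support_aField hg hm
      have := ih m' hm'
      omega
  have hAH : ∀ k, (hField g)^[k] Q = (-1 : ℂ) ^ k • (aField g)^[k] Q := by
    intro k
    induction k with
    | zero => simp
    | succ k ih =>
      have hc : ∀ k, aField g ((hField g)^[k] Q) = (hField g)^[k] (aField g Q) := by
        intro k
        induction k with
        | zero => rfl
        | succ k ih =>
          rw [Function.iterate_succ_apply', Function.iterate_succ_apply', ← ih, hField_aField]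
      have hneg : hField g Q = (-1 : ℂ) • aField g Q := by
        rw [eq_neg_of_add_eq_zero_left hgQ]; simp
      rw [Function.iterate_succ_apply, hneg]
      have : ∀ (k : ℕ) (r : ℂ) (P : Pol n),
          (hField g)^[k] (r • P) = r • (hField g)^[k] P := by
        intro k r
        induction k with
        | zero => simp
        | succ k ih => intro P; simp [Function.iterate_succ_apply, ih]
      rw [this, ← hc, ih, Derivation.map_smul, smul_smul, ← Function.iterate_succ_apply' (aField g),
        pow_succ']
  refine ⟨d + 1, ?_⟩
  rw [← support_eq_empty, Finset.eq_empty_iff_forall_notMem]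
  intro m hm
  have h1 := hH _ m hm
  rw [hAH] at hm
  have h2 := hA _ m (support_smul hm)
  have : d + 1 ≤ (d + 1) * (s - 1) := Nat.le_mul_of_pos_right _ (by omega)
  omega

/-- A field `g` preserving `Q` vanishes if some field `q` of degree higher by `d` has real part
acting on `Q` as `-2iQ` times `g`. -/
lemma eq_zero_of_companion_field
    (hQ : ∀ m ∈ Q.support, 1 ≤ zdeg m ∧ 1 ≤ adeg m ∧ zdeg m + adeg m = d)
    (hnd : ∀ F, hField F Q = 0 → F = 0) {g q : Fin n → Hol n} {s : ℕ} (hs : 1 ≤ s)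
    (hg : ∀ j, (g j).IsHomogeneous s) (hq : ∀ j, (q j).IsHomogeneous (d + s))
    (hgQ : hField g Q + aField g Q = 0)
    (hqQ : hField q Q + aField q Q = C (-2 * I) * (Q * hField g Q)) : g = 0 := by
  set N := hField g with hN
  set D := hField q + aField q with hD
  have hDQ : D Q = C (-2 * I) * (Q * N Q) := hqQ
  have hbr : br g q = 0 := by
    refine eq_zero_of_degree_le hQ hnd (isHomogeneous_br hg hq hs (by omega)
      (r := d + s + s - 1) (by omega)) (by omega) ?_
    have e1 : (hField g + aField g) (D Q) = 0 := by
      have h : (hField g + aField g) (N Q) = 0 := by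
        rw [hN, Derivation.add_apply, ← hField_aField, ← map_add, hgQ, map_zero]
      rw [hDQ, derivation_const_mul, Derivation.leibniz, h, Derivation.add_apply, hgQ]
      simp
    have e2 : D ((hField g + aField g) Q) = 0 := by
      rw [show (hField g + aField g) Q = 0 from hgQ, map_zero]
    rw [hField_br, aField_br]
    simp only [hD, Derivation.add_apply, map_add, hField_aField] at e1 e2 ⊢
    linear_combination e1 - e2
  have hcomm : ∀ x, N (D x) = D (N x) := by
    intro x
    have := hField_br g q x
    rw [hbr, show hField (0 : Fin n → Hol n) = 0 from
      derivation_ext (by rintro (j | j) <;> simp [hField_X_inl, hField_X_inr])] at this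
    simp only [hD, hN, Derivation.add_apply, map_add, hField_aField]
    simp only [Derivation.zero_apply] at this
    linear_combination -this
  have hDQ' : D Q = (-I) • N (Q * Q) := by
    rw [hDQ, Derivation.leibniz, smul_eq_C_mul, smul_eq_mul, C_mul, C_neg, C_neg]
    have : (C 2 : Pol n) = 2 := rfl
    rw [this]; ring
  have hnil : ∃ k, N^[k] Q = 0 := by
    rcases hs.eq_or_lt with rfl | hs
    · have htop : ⨆ a, maxGenEigenspace (N : Pol n →ₗ[ℂ] Pol n) a = ⊤ := by
        obtain ⟨A, hA⟩ := exists_eq_lin hg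
        rw [hN, hA]
        exact iSup_maxGenEigenspace_hField A
      have := mem_maxGenEigenspace_zero N D hcomm htop Q hDQ'
      rw [mem_maxGenEigenspace] at this
      obtain ⟨k, hk⟩ := this
      refine ⟨k, ?_⟩
      rw [zero_smul, sub_zero, Module.End.pow_apply] at hk
      exact hk
    · exact exists_iterate_eq_zero hQ hs hg hgQ
  have hiter : ∀ k x, N^[k] (D x) = D (N^[k] x) := by
    intro k
    induction k with
    | zero => simp
    | succ k ih => intro x; simp only [Function.iterate_succ_apply, hcomm, ih]
  by_contra hg0
  have hR : N Q ≠ 0 := fun h => hg0 (hnd g h)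
  have hQ0 : Q ≠ 0 := by rintro h; simp [h] at hR
  classical
  obtain ⟨r, hr0, hr⟩ : ∃ r, N^[r + 1] Q = 0 ∧ N^[r] Q ≠ 0 := by
    have h0 : Nat.find hnil ≠ 0 := by
      intro h
      have := Nat.find_spec hnil
      rw [h] at this
      exact hQ0 this
    refine ⟨Nat.find hnil - 1, ?_, Nat.find_min hnil (by omega)⟩
    rw [Nat.sub_add_cancel (by omega)]
    exact Nat.find_spec hnil
  have hr1 : r ≠ 0 := by rintro rfl; exact hR hr0
  have hzero : ∀ k, r + 1 ≤ k → N^[k] Q = 0 := by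
    intro k hk
    obtain ⟨l, rfl⟩ := Nat.exists_eq_add_of_le' hk
    rw [Function.iterate_add_apply, hr0, iterate_map_zero]
  have hr_one : r = 1 := by
    by_contra hne
    obtain ⟨c, hc, h⟩ := exists_iterate_mul N r r Q Q hr0 hr0
    have h1 : D (N^[r + r - 1] Q) = (-I) • N^[r + r] (Q * Q) := by
      rw [← hiter, hDQ']
      have : ∀ (k : ℕ) (P : Pol n), N^[k] ((-I) • P) = (-I) • N^[k] P := by
        intro k
        induction k with
        | zero => simp
        | succ k ih => intro P; rw [Function.iterate_succ_apply, Derivation.map_smul, ih]; rfl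
      rw [this, ← Function.iterate_succ_apply N, show (r + r - 1).succ = r + r by omega]
    rw [hzero _ (by omega), map_zero, h] at h1
    have h2 := (smul_eq_zero.1 h1.symm).resolve_left (by simp)
    exact mul_ne_zero hr hr ((smul_eq_zero.1 h2).resolve_left (by omega))
  subst hr_one
  have hNR : N (N Q) = 0 := hr0
  have hDR : D (N Q) = C (-2 * I) * (N Q) ^ 2 := by
    rw [← hcomm, hDQ, derivation_const_mul, Derivation.leibniz, hNR]
    simp [pow_two]
  have hDm : ∀ m : ℕ, ∃ r : ℂ, r ≠ 0 ∧ D^[m] (N Q) = C r * (N Q) ^ (m + 1) := by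
    intro m
    induction m with
    | zero => exact ⟨1, one_ne_zero, by simp⟩
    | succ m ih =>
      obtain ⟨r, hr, h⟩ := ih
      refine ⟨r * (m + 1) * (-2 * I), by
        have : (m + 1 : ℂ) ≠ 0 := by exact_mod_cast m.succ_ne_zero
        simp [hr, this], ?_⟩
      rw [Function.iterate_succ_apply', h, derivation_const_mul, Derivation.leibniz_pow, hDR]
      simp only [smul_eq_mul, nsmul_eq_mul, C_mul, C_add, map_natCast, C_1,
        Nat.add_sub_cancel]
      push_cast
      ring
  have hsupp : ∀ m : ℕ, ∀ e ∈ (D^[m] (N Q)).support, ¬ (d + s - 1) ∣ zdeg e := by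
    intro m
    induction m with
    | zero =>
      intro e he hdvd
      obtain ⟨e', he', h1, h2, h3⟩ := mem_support_hField hg he
      have := hQ e' he'
      have := Nat.le_of_dvd (by omega) hdvd
      omega
    | succ m ih =>
      intro e he hdvd
      rw [Function.iterate_succ_apply', hD, Derivation.add_apply] at he
      rcases Finset.mem_union.1 (support_add he) with he | he
      · obtain ⟨e', he', h1, h2, h3⟩ := mem_support_hField hq he
        refine ih e' he' ?_
        have : zdeg e = zdeg e' + (d + s - 1) := by omega
        rw [this] at hdvd
        exact (Nat.dvd_add_left dvd_rfl).1 hdvd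
      · obtain ⟨e', he', h1, h2, h3⟩ := mem_support_aField hq he
        exact ih e' he' (h3 ▸ hdvd)
  obtain ⟨e, he, hek⟩ := exists_forall_nsmul_mem_support hR
  have hd1 : d + s - 1 ≠ 0 := by
    obtain ⟨e', he', -⟩ := mem_support_hField hg he
    have := hQ e' he'
    omega
  obtain ⟨r, hr, h⟩ := hDm (d + s - 1 - 1)
  refine hsupp (d + s - 1 - 1) ((d + s - 1) • e) ?_ (by rw [zdeg_nsmul]; exact dvd_mul_right _ _)
  rw [h, Nat.sub_add_cancel (by omega), mem_support_iff, coeff_C_mul]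
  exact mul_ne_zero hr (mem_support_iff.1 (hek _))

end Rigidity

/-! ### Real parts of linear fields -/

section RealPart

variable {n : ℕ}

lemma exists_basis_maxGenEigenspace (B : Module.End ℂ (Fin n → ℂ)) :
    ∃ (b : Module.Basis (Fin n) ℂ (Fin n → ℂ)) (μ : Fin n → ℂ),
      ∀ i, b i ∈ maxGenEigenspace B (μ i) := by
  have hs : ⊤ ≤ Submodule.span ℂ (⋃ a, (maxGenEigenspace B a : Set (Fin n → ℂ))) := by
    rw [← Submodule.iSup_eq_span, iSup_maxGenEigenspace_eq_top]
  let b₀ := Module.Basis.ofSpan hs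
  let b := b₀.reindex (b₀.indexEquiv (Pi.basisFun ℂ (Fin n)))
  have h : ∀ i, ∃ a, b i ∈ maxGenEigenspace B a := by
    intro i
    have h1 : b i ∈ Set.range b₀ := by simp [b]
    exact Set.mem_iUnion.1 (Module.Basis.ofSpan_subset hs h1)
  choose μ hμ using h
  exact ⟨b, μ, hμ⟩

lemma cj_mem_maxGenEigenspace {T : Module.End ℂ (Pol n)} (hT : ∀ P, T (cj P) = cj (T P)) {a : ℂ}
    {P : Pol n} (hP : P ∈ maxGenEigenspace T a) :
    cj P ∈ maxGenEigenspace T ((starRingEnd ℂ) a) := by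
  rw [mem_maxGenEigenspace] at *
  obtain ⟨k, hk⟩ := hP
  refine ⟨k, ?_⟩
  have : ∀ (k : ℕ) (P : Pol n), ((T - (starRingEnd ℂ) a • (1 : Module.End ℂ (Pol n))) ^ k) (cj P) =
      cj (((T - a • (1 : Module.End ℂ (Pol n))) ^ k) P) := by
    intro k
    induction k with
    | zero => simp
    | succ k ih =>
      intro P
      rw [pow_succ, pow_succ, Module.End.mul_apply, Module.End.mul_apply, ← ih]
      simp [hT, cj_smul]
  rw [this, hk, map_zero]

/-- The real field `X + X̄` of the holomorphic field `X = Σ F_j ∂/∂z_j`. -/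
def reField (F : Fin n → Hol n) : Derivation ℂ (Pol n) (Pol n) := hField F + aField F

lemma reField_apply (F : Fin n → Hol n) (P : Pol n) : reField F P = hField F P + aField F P := rfl

lemma reField_cj (F : Fin n → Hol n) (P : Pol n) : reField F (cj P) = cj (reField F P) := by
  rw [reField_apply, reField_apply, hField_cj, aField_cj, map_add, add_comm]

lemma reField_rename (F : Fin n → Hol n) (p : Hol n) :
    reField F (rename Sum.inl p) = rename Sum.inl (mkDerivation ℂ F p) := by
  rw [reField_apply, hField_rename, aField_rename, add_zero]

lemma reField_X_inl (F : Fin n → Hol n) (j : Fin n) :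
    reField F (X (Sum.inl j)) = rename Sum.inl (F j) := by
  rw [reField_apply, hField_X_inl, aField_X_inl, add_zero]

lemma reField_X_inr (F : Fin n → Hol n) (j : Fin n) :
    reField F (X (Sum.inr j)) = cj (rename Sum.inl (F j)) := by
  rw [reField_apply, hField_X_inr, aField_X_inr, zero_add]

lemma reField_lin_linForm (A : Matrix (Fin n) (Fin n) ℂ) (v : Fin n → ℂ) :
    reField (lin A) (linForm v) = linForm (Matrix.toLin' A.transpose v) := by
  have h : aField (lin A) (linForm v) = 0 := by
    simp [linForm, Fintype.linearCombination_apply, aField_X_inl]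
  rw [reField_apply, hField_lin_linForm, h, add_zero]

lemma mkDerivation_X_of_isHomogeneous {σ : Type*} [Fintype σ] {P : MvPolynomial σ ℂ} {k : ℕ}
    (hP : P.IsHomogeneous k) : mkDerivation ℂ (X : σ → MvPolynomial σ ℂ) P = (k : ℂ) • P := by
  rw [mkDerivation_eq_sum, hP.sum_X_mul_pderiv, Nat.cast_smul_eq_nsmul]

lemma reField_lin_sub_smul_one (A : Matrix (Fin n) (Fin n) ℂ) (r : ℝ) :
    reField (lin (A - (r : ℂ) • 1)) = reField (lin A) - (r : ℂ) • mkDerivation ℂ X := by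
  have hl : ∀ j, lin (A - (r : ℂ) • 1) j = lin A j - C (r : ℂ) * X j := by
    intro j
    simp [lin, Matrix.sub_apply, sub_mul, Finset.sum_sub_distrib, Matrix.one_apply,
      apply_ite C, ite_mul, -Complex.coe_smul]
  refine derivation_ext fun i => ?_
  rcases i with j | j
  · simp [reField_X_inl, hl, mkDerivation_X, smul_eq_C_mul, -Complex.coe_smul]
  · simp [reField_X_inr, hl, mkDerivation_X, smul_eq_C_mul, cj_C, cj_X, -Complex.coe_smul]

/-- If the linear field with matrix `A` rescales `Q` and no nonzero linear field with real
diagonalizable matrix preserves `Q`, then the eigenvalues of `A` share their real part, so that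
`A` commutes with no nonlinear homogeneous field. -/
lemma eq_zero_of_br_lin_eq_zero {d : ℕ} (hd : d ≠ 0) {Q : Pol n} (hQ : Q.IsHomogeneous d)
    (hrot : ∀ A, reField (lin A) Q = 0 → ReDiag A → A = 0) {A : Matrix (Fin n) (Fin n) ℂ} {a : ℝ}
    (ha : a ≠ 0) (hA : reField (lin A) Q = ((2 * a : ℝ) : ℂ) • Q) {f : Fin n → Hol n} {s : ℕ}
    (hs : 2 ≤ s) (hf : ∀ j, (f j).IsHomogeneous s) (hbr : br (lin A) f = 0) : f = 0 := by
  obtain ⟨b, μ, hb⟩ := exists_basis_maxGenEigenspace (Matrix.toLin' A.transpose)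
  let V : Matrix (Fin n) (Fin n) ℂ := Matrix.of b
  have hV : IsUnit V := Matrix.linearIndependent_rows_iff_isUnit.1 b.linearIndependent
  have hVdet : IsUnit V.det := (Matrix.isUnit_iff_isUnit_det _).1 hV
  let ρ : Fin n → ℂ := fun i => ((μ i).re : ℂ)
  let R : Matrix (Fin n) (Fin n) ℂ := V⁻¹ * Matrix.diagonal ρ * V
  have hVR : V * R = Matrix.diagonal ρ * V := by
    simp only [R, ← mul_assoc, Matrix.mul_nonsing_inv _ hVdet, one_mul]
  have hRV : R * V⁻¹ = V⁻¹ * Matrix.diagonal ρ := by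
    simp only [R, mul_assoc, Matrix.mul_nonsing_inv _ hVdet, mul_one]
  have hRb : ∀ i, Matrix.toLin' R.transpose (b i) = ρ i • b i := by
    intro i
    ext k
    have := congrFun (congrFun hVR i) k
    rw [Matrix.diagonal_mul] at this
    rw [Matrix.toLin'_apply, Matrix.mulVec_transpose]
    exact this
  let T : Module.End ℂ (Pol n) := reField (lin A)
  let S : Module.End ℂ (Pol n) := reField (lin R)
  let W : ℂ → Submodule ℂ (Pol n) := fun a => maxGenEigenspace T a ⊓ eigenspace S (a.re : ℂ)
  have hW1 : 1 ∈ W 0 := by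
    refine ⟨eigenspace_le_maxGenEigenspace (mem_eigenspace_zero ?_), ?_⟩
    · simp [T]
    · rw [Complex.zero_re, Complex.ofReal_zero]
      exact mem_eigenspace_zero (by simp [S])
  have hWmul : ∀ a b x y, x ∈ W a → y ∈ W b → x * y ∈ W (a + b) := by
    rintro a b x y ⟨hx, hx'⟩ ⟨hy, hy'⟩
    refine ⟨mul_mem_maxGenEigenspace _ hx hy, ?_⟩
    rw [Complex.add_re, Complex.ofReal_add]
    exact mul_mem_eigenspace _ hx' hy'
  have hWcj : ∀ P ∈ ⨆ a, W a, cj P ∈ ⨆ a, W a := by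
    intro P hP
    induction hP using Submodule.iSup_induction' with
    | mem a P hP =>
      refine Submodule.mem_iSup_of_mem ((starRingEnd ℂ) a)
        ⟨cj_mem_maxGenEigenspace (reField_cj _) hP.1, ?_⟩
      have h : reField (lin R) P = (a.re : ℂ) • P := mem_eigenspace_iff.1 hP.2
      rw [Complex.conj_re]
      refine mem_eigenspace_iff.2 ?_
      change reField (lin R) (cj P) = _
      rw [reField_cj, h, cj_smul, Complex.conj_ofReal]
    | zero => simp
    | add x y _ _ h h' => rw [map_add]; exact add_mem h h'
  have hWl : ∀ v, linForm v ∈ ⨆ a, W a := by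
    intro v
    rw [← b.sum_repr v, map_sum]
    refine Submodule.sum_mem _ fun i _ => ?_
    rw [map_smul]
    refine Submodule.smul_mem _ _ (Submodule.mem_iSup_of_mem (μ i)
      ⟨map_mem_maxGenEigenspace _ _ linForm (reField_lin_linForm A) (hb i), ?_⟩)
    refine mem_eigenspace_iff.2 ?_
    exact (reField_lin_linForm R (b i)).trans (by rw [hRb, map_smul])
  have hWtop : ⨆ a, W a = ⊤ := by
    refine iSup_eq_top_of_X_mem W hW1 hWmul ?_
    rintro (j | j)
    · rw [← linForm_single]
      exact hWl _
    · rw [← Sum.swap_inl, ← cj_X, ← linForm_single]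
      exact hWcj _ (hWl _)
  have hTW : ∀ a P, P ∈ maxGenEigenspace T a → reField (lin R) P = (a.re : ℂ) • P := by
    intro a P hP
    exact mem_eigenspace_iff.1 (le_of_iSup_eq_top (fun _ => inf_le_left)
      (independent_maxGenEigenspace T) hWtop a hP).2
  have hdC : (d : ℂ) ≠ 0 := Nat.cast_ne_zero.2 hd
  have hRQ : reField (lin (R - ((2 * a / d : ℝ) : ℂ) • 1)) Q = 0 := by
    have h := hTW _ Q (eigenspace_le_maxGenEigenspace (mem_eigenspace_iff.2 hA))
    rw [reField_lin_sub_smul_one, Derivation.sub_apply, Derivation.smul_apply,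
      mkDerivation_X_of_isHomogeneous hQ, h, Complex.ofReal_re, smul_smul, ← sub_smul]
    push_cast
    rw [div_mul_cancel₀ _ hdC, sub_self, zero_smul]
  have hR0 : R - ((2 * a / d : ℝ) : ℂ) • 1 = 0 := by
    refine hrot _ hRQ ⟨V⁻¹, fun i => ρ i - ((2 * a / d : ℝ) : ℂ),
      (Matrix.isUnit_nonsing_inv_iff).2 hV, ?_, fun j => by simp [ρ, -Complex.ofReal_div]⟩
    rw [← Matrix.diagonal_sub, mul_sub, sub_mul, hRV, smul_mul_assoc, one_mul,
      ← Matrix.smul_one_eq_diagonal, mul_smul_comm, mul_one]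
  have hρ : ∀ i, ρ i = ((2 * a / d : ℝ) : ℂ) := by
    intro i
    have h := hRb i
    rw [sub_eq_zero.1 hR0, Matrix.transpose_smul, Matrix.transpose_one, map_smul,
      Matrix.toLin'_one] at h
    exact (smul_left_injective ℂ (b.ne_zero i) h).symm
  have hRhom : ∀ (P : Pol n) (k : ℕ), P.IsHomogeneous k →
      reField (lin R) P = (((2 * a / d : ℝ) : ℂ) * k) • P := by
    intro P k hP
    have h := congrArg (fun D : Derivation ℂ (Pol n) (Pol n) => D P)
      (reField_lin_sub_smul_one R (2 * a / d))
    have h0 : reField (lin (0 : Matrix (Fin n) (Fin n) ℂ)) = 0 := by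
      refine derivation_ext fun i => ?_
      rcases i with j | j
      · simp [reField_X_inl, lin]
      · simp [reField_X_inr, lin]
    simp only [hR0, h0, Derivation.sub_apply, Derivation.smul_apply, Derivation.zero_apply,
      mkDerivation_X_of_isHomogeneous hP, smul_smul] at h
    exact (sub_eq_zero.1 h.symm)
  let Ψ : (Fin n → ℂ) →ₗ[ℂ] Pol n :=
    Fintype.linearCombination ℂ fun j => rename Sum.inl (f j)
  have hΨ : ∀ v, reField (lin A) (Ψ v) = Ψ (Matrix.toLin' A.transpose v) := by
    intro v
    have hbr' : ∀ j, mkDerivation ℂ (lin A) (f j) = ∑ k, C (A j k) * f k := by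
      intro j
      have h : mkDerivation ℂ f (lin A j) = ∑ k, C (A j k) * f k := by
        simp [lin, mkDerivation_X, Derivation.leibniz]
      rw [← h]
      exact sub_eq_zero.1 (congrFun hbr j)
    simp only [Ψ, Fintype.linearCombination_apply, map_sum, Derivation.map_smul, reField_rename,
      hbr', map_mul, rename_C, Matrix.toLin'_apply, Matrix.mulVec, dotProduct,
      Matrix.transpose_apply, Finset.sum_smul, Finset.smul_sum]
    rw [Finset.sum_comm]
    refine Finset.sum_congr rfl fun k _ => Finset.sum_congr rfl fun j _ => ?_
    simp only [smul_eq_C_mul, C_mul]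
    ring
  have hΨb : ∀ i, Ψ (b i) = 0 := by
    intro i
    have h1 := hTW _ _ (map_mem_maxGenEigenspace _ T Ψ hΨ (hb i))
    have hhom : (Ψ (b i)).IsHomogeneous s := by
      simp only [Ψ, Fintype.linearCombination_apply, smul_eq_C_mul]
      refine IsHomogeneous.sum _ _ _ fun j _ => ?_
      simpa using (isHomogeneous_C _ (b i j)).mul (hf j).rename_isHomogeneous
    rw [hRhom _ s hhom, show ((μ i).re : ℂ) = _ from hρ i, ← sub_eq_zero, ← sub_smul,
      smul_eq_zero] at h1
    refine h1.resolve_left ?_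
    have hs1 : (s : ℝ) - 1 ≠ 0 := by
      have : (2 : ℝ) ≤ s := by exact_mod_cast hs
      linarith
    have hdR : (d : ℝ) ≠ 0 := Nat.cast_ne_zero.2 hd
    have h2 : 2 * a / d * ((s : ℝ) - 1) ≠ 0 := by positivity
    intro h3
    refine h2 (Complex.ofReal_injective ?_)
    rw [Complex.ofReal_zero, ← h3]
    push_cast
    ring
  have hΨ0 : Ψ = 0 := b.ext fun i => by rw [hΨb i, LinearMap.zero_apply]
  funext j
  have h : Ψ (Pi.single j 1) = rename Sum.inl (f j) := by
    simp [Ψ, Fintype.linearCombination_apply, Pi.single_apply]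
  rw [hΨ0, LinearMap.zero_apply] at h
  exact rename_injective _ Sum.inl_injective (by rw [← h, Pi.zero_apply, map_zero])

end RealPart

/-! ### Fields of weight one -/

section WeightOne

variable {n d : ℕ} {Q : Pol n}

lemma isHomogeneous_of_mem_support
    (hQ : ∀ m ∈ Q.support, 1 ≤ zdeg m ∧ 1 ≤ adeg m ∧ zdeg m + adeg m = d) :
    Q.IsHomogeneous d := by
  intro m hm
  change Finsupp.weight (fun _ => 1) m = d
  rw [← Finsupp.degree_eq_weight_one, Finsupp.degree_eq_sum, Fintype.sum_sum_type]
  exact (hQ m (mem_support_iff.2 hm)).2.2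

lemma reField_br {l f : Fin n → Hol n} (P : Pol n) :
    reField (br l f) P = reField l (reField f P) - reField f (reField l P) := by
  simp only [reField_apply, hField_br, aField_br, map_add, hField_aField]
  ring

/-- A field of weight one with linear part `l` and higher part `p` forces `f = 0` for every
homogeneous field `f` of degree at least two preserving `Q`. -/
lemma eq_zero_of_weight_one (hd : 2 ≤ d)
    (hQ : ∀ m ∈ Q.support, 1 ≤ zdeg m ∧ 1 ≤ adeg m ∧ zdeg m + adeg m = d)
    (hnd : ∀ F, hField F Q = 0 → F = 0)
    (hrot : ∀ A, reField (lin A) Q = 0 → ReDiag A → A = 0) {a : ℝ} {l p : Fin n → Hol n}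
    (hl : ∀ j, (l j).IsHomogeneous 1) (hp : ∀ j, (p j).IsHomogeneous (d + 1))
    (hlQ : reField l Q = ((2 * a : ℝ) : ℂ) • Q)
    (hpQ : reField p Q = C (-I) * (Q * (hField l Q - aField l Q)))
    (hne : ¬ (a = 0 ∧ l = 0 ∧ p = 0)) {f : Fin n → Hol n} {s : ℕ} (hs : 2 ≤ s)
    (hf : ∀ j, (f j).IsHomogeneous s) (hfQ : reField f Q = 0) : f = 0 := by
  have ha : a ≠ 0 := by
    rintro rfl
    rw [mul_zero, Complex.ofReal_zero, zero_smul] at hlQ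
    have hl0 : l = 0 := by
      refine eq_zero_of_companion_field hQ hnd le_rfl hl hp hlQ (hpQ.trans ?_)
      rw [show aField l Q = -hField l Q from eq_neg_of_add_eq_zero_right hlQ,
        show C (-2 * I) = 2 * C (-I) from by rw [← map_ofNat C 2, ← C_mul]; ring_nf]
      ring
    refine hne ⟨rfl, hl0, eq_zero_of_degree_le hQ hnd hp (by omega) (hpQ.trans ?_)⟩
    have : hField l Q = 0 := by
      rw [hl0, hField_eq_sum]; simp
    rw [show aField l Q = -hField l Q from eq_neg_of_add_eq_zero_right hlQ, this]
    simp
  have hg : br l f = 0 := by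
    have hgQ : reField (br l f) Q = 0 := by
      rw [reField_br, hfQ, hlQ, Derivation.map_smul, hfQ]
      simp
    refine eq_zero_of_companion_field hQ hnd (s := s) (q := br p f) (by omega)
      (isHomogeneous_br hl hf le_rfl (by omega) (by omega))
      (isHomogeneous_br hp hf (by omega) (by omega) (by omega)) hgQ ?_
    have hh : reField f (hField l Q) = -hField (br l f) Q := by
      have : hField l (reField f Q) = 0 := by rw [hfQ, map_zero]
      rw [reField_apply, map_add, hField_aField] at this
      rw [reField_apply, hField_br]
      linear_combination this
    have hk : reField f (aField l Q) = hField (br l f) Q := by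
      have h1 : aField l (reField f Q) = 0 := by rw [hfQ, map_zero]
      rw [reField_apply, map_add, ← hField_aField] at h1
      rw [reField_apply, aField_br] at hgQ
      rw [reField_apply]
      linear_combination h1 - hgQ
    change reField (br p f) Q = _
    rw [reField_br, hfQ, hpQ, derivation_const_mul, Derivation.leibniz, map_sub, hh, hk,
      hfQ, show C (-2 * I) = 2 * C (-I) from by rw [← map_ofNat C 2, ← C_mul]; ring_nf]
    simp only [map_zero, smul_eq_mul]
    ring
  obtain ⟨A, rfl⟩ := exists_eq_lin hl
  exact eq_zero_of_br_lin_eq_zero (by omega) (isHomogeneous_of_mem_support hQ) hrot ha hlQ hs hf hg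

/-- The restriction of a polynomial to `z̄ = 0`. -/
def holPart : Pol n →ₐ[ℂ] Hol n := aeval (Sum.elim X 0)

lemma holPart_rename (g : Hol n) : holPart (rename Sum.inl g) = g := by
  rw [holPart, aeval_rename, Sum.elim_comp_inl, aeval_X_left_apply]

lemma holPart_eq_zero {P : Pol n} (hP : ∀ m ∈ P.support, 1 ≤ adeg m) : holPart P = 0 := by
  rw [holPart, aeval_def, eval₂_eq']
  refine Finset.sum_eq_zero fun m hm => ?_
  obtain ⟨j, hj⟩ : ∃ j, m (Sum.inr j) ≠ 0 := by
    by_contra! h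
    have := hP m hm
    simp [adeg, h] at this
  rw [Finset.prod_eq_zero (Finset.mem_univ (Sum.inr j)) (by simp [hj]), mul_zero]

lemma holPart_cj_rename {g : Hol n} {k : ℕ} (hk : 1 ≤ k) (hg : g.IsHomogeneous k) :
    holPart (cj (rename Sum.inl g)) = 0 := by
  classical
  refine holPart_eq_zero fun m hm => ?_
  obtain ⟨m', hm', rfl⟩ := mem_support_cj hm
  rw [support_rename_of_injective Sum.inl_injective, Finset.mem_image] at hm'
  obtain ⟨e, he, rfl⟩ := hm'
  rw [adeg_swap, zdeg_mapDomain_inl, Finsupp.degree_eq_weight_one]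
  exact hk.trans_eq (hg (mem_support_iff.1 he)).symm

lemma holPart_reField
    (hQ : ∀ m ∈ Q.support, 1 ≤ zdeg m ∧ 1 ≤ adeg m ∧ zdeg m + adeg m = d) {l : Fin n → Hol n}
    {s : ℕ} (hs : 1 ≤ s) (hl : ∀ j, (l j).IsHomogeneous s) : holPart (reField l Q) = 0 := by
  classical
  refine holPart_eq_zero fun m hm => ?_
  rcases Finset.mem_union.1 (support_add hm) with hm | hm
  · obtain ⟨m', hm', h⟩ := mem_support_hField hl hm
    have := hQ m' hm'
    omega
  · obtain ⟨m', hm', h⟩ := mem_support_aField hl hm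
    have := hQ m' hm'
    omega

/-- The tangency equation for a field of weight one, sorted by powers of the real part of `w`. -/
lemma weight_one_equations (hd : 1 ≤ d)
    (hQ : ∀ m ∈ Q.support, 1 ≤ zdeg m ∧ 1 ≤ adeg m ∧ zdeg m + adeg m = d) (hQr : cj Q = Q)
    {l p : Fin n → Hol n} {g : ℕ → Hol n} (hl : ∀ j, (l j).IsHomogeneous 1)
    (hp : ∀ j, (p j).IsHomogeneous (d + 1)) (hg : ∀ i, (g i).IsHomogeneous (2 * d - d * i))
    (h : ∀ u : ℝ, ∀ K, K = C (-I / 2) * (rename Sum.inl (g 0) +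
        rename Sum.inl (g 1) * (C (u : ℂ) + C I * Q) +
        rename Sum.inl (g 2) * (C (u : ℂ) + C I * Q) ^ 2) -
        (hField p Q + (C (u : ℂ) + C I * Q) * hField l Q) → K + cj K = 0) :
    ∃ a : ℝ, g 0 = 0 ∧ g 1 = 0 ∧ g 2 = C (a : ℂ) ∧ reField l Q = ((2 * a : ℝ) : ℂ) • Q ∧
      reField p Q = C (-I) * (Q * (hField l Q - aField l Q)) := by
  obtain ⟨α, hα⟩ : ∃ α, g 2 = C α := by
    have := hg 2
    rw [show 2 * d - d * 2 = 0 by omega] at this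
    exact ⟨_, totalDegree_eq_zero_iff_eq_C.1 ((totalDegree_zero_iff_isHomogeneous _).2 this)⟩
  have hh : ∀ (F : Fin n → Hol n), cj (hField F Q) = aField F Q := by
    intro F
    rw [← aField_cj, hQr]
  have hcI : C (I : ℂ) * C I = (-1 : Pol n) := by rw [← C_mul, I_mul_I]; simp
  set G₀ : Pol n := rename Sum.inl (g 0) with hG₀
  set G₁ : Pol n := rename Sum.inl (g 1) with hG₁
  have e : ∀ u : ℝ, C (-I / 2) * (G₀ - cj G₀ + C (u : ℂ) * (G₁ - cj G₁) +
      C I * Q * (G₁ + cj G₁) +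
      ((C (u : ℂ)) ^ 2 - Q ^ 2) * (C α - C ((starRingEnd ℂ) α)) +
      2 * C (u : ℂ) * C I * Q * (C α + C ((starRingEnd ℂ) α)))
      - reField p Q - C (u : ℂ) * reField l Q - C I * Q * (hField l Q - aField l Q) = 0 := by
    intro u
    rw [← h u _ rfl]
    have h2 : (starRingEnd ℂ) (-I / 2) = - (-I / 2) := by
      rw [map_div₀, map_neg, conj_I, map_ofNat]; ring
    simp only [map_add, map_sub, map_mul, map_pow, cj_C, hQr, hh, h2, hα, rename_C, conj_ofReal,
      conj_I, reField_apply, C_neg]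
    linear_combination (-C (-I / 2) * Q ^ 2 * (C α - C ((starRingEnd ℂ) α))) * hcI
  have hθQ : holPart Q = 0 := holPart_eq_zero fun m hm => (hQ m hm).2.1
  have hI2 : C (2 * I) * C (-I / 2) = (1 : Pol n) := by
    rw [← C_mul, ← C_1]; congr 1; linear_combination -I_mul_I
  have hIk : C (-I / 2) * C I * 2 = (1 : Pol n) := by
    rw [← map_ofNat C 2, ← C_mul, ← C_mul, ← C_1]; congr 1; linear_combination -I_mul_I
  have h20 : (2 : Pol n) ≠ 0 := two_ne_zero
  have e0 := e 0
  have e1 := e 1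
  have e2 := e (-1)
  simp only [ofReal_zero, ofReal_one, ofReal_neg, C_neg, C_0, C_1] at e0 e1 e2
  have hαr : (C α : Pol n) = C ((starRingEnd ℂ) α) := by
    refine sub_eq_zero.1 (mul_left_cancel₀ h20 ?_)
    linear_combination C (2 * I) * (e1 + e2 - 2 * e0) -
      2 * (C α - C ((starRingEnd ℂ) α)) * hI2
  rw [← hαr] at e0 e1 e2
  have f1 : C (-I / 2) * (G₁ - cj G₁) + 2 * C α * Q - reField l Q = 0 := by
    refine mul_left_cancel₀ h20 ?_
    linear_combination e1 - e2 - 4 * C α * Q * hIk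
  have hI0 : (C (-I / 2) : Hol n) ≠ 0 := by simp
  have hθC : ∀ a : ℂ, holPart (C a : Pol n) = C a := fun a => by simp [holPart]
  have g1 : g 1 = 0 := by
    have := congrArg holPart f1
    rw [map_sub, map_add, map_mul, map_sub, map_mul, hθQ, holPart_reField hQ le_rfl hl,
      hG₁, holPart_rename, holPart_cj_rename (by omega) (hg 1), hθC] at this
    simpa using this
  rw [hG₁, g1] at e0 f1
  have g0 : g 0 = 0 := by
    have := congrArg holPart e0
    simp only [map_sub, map_add, map_mul, hθQ, holPart_reField hQ le_rfl hl,
      holPart_reField hQ (Nat.le_add_left 1 d) hp,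
      hG₀, holPart_rename, holPart_cj_rename (by omega) (hg 0), hθC, map_zero] at this
    simpa using this
  rw [hG₀, g0] at e0
  simp only [map_zero] at e0 f1
  have hαc : (α.re : ℂ) = α := conj_eq_iff_re.1 (C_injective _ _ hαr).symm
  refine ⟨α.re, g0, g1, by rw [hα, hαc], ?_, ?_⟩
  · rw [ofReal_mul, hαc, smul_eq_C_mul, C_mul, ofReal_ofNat, map_ofNat]
    linear_combination -f1
  · rw [C_neg]
    linear_combination -e0

end WeightOne

/-! ### Polarization of the coefficient family -/

section Polar

variable {n d : ℕ} {c : ((Fin n →₀ ℕ) × (Fin n →₀ ℕ)) →₀ ℂ}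

/-- The polarization of `QEval c`, a polynomial in `z` and `z̄`. -/
def polar (c : ((Fin n →₀ ℕ) × (Fin n →₀ ℕ)) →₀ ℂ) : Pol n :=
  c.sum fun p a => monomial (p.1.sumElim p.2) a

lemma eval_polar (c : ((Fin n →₀ ℕ) × (Fin n →₀ ℕ)) →₀ ℂ) (z : Fin n → ℂ) :
    eval (diagPt z) (polar c) = QEval c z := by
  rw [polar, QEval, Finsupp.sum, Finsupp.sum, map_sum]
  refine Finset.sum_congr rfl fun p _ => ?_
  rw [eval_monomial, Finsupp.prod_fintype _ _ (by simp), Fintype.prod_sum_type, mul_assoc]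
  simp [diagPt]

lemma eval_pderiv_polar (c : ((Fin n →₀ ℕ) × (Fin n →₀ ℕ)) →₀ ℂ) (k : Fin n) (z : Fin n → ℂ) :
    eval (diagPt z) (pderiv (Sum.inl k) (polar c)) = QDeriv c k z := by
  classical
  rw [polar, QDeriv, Finsupp.sum, Finsupp.sum, map_sum, map_sum]
  refine Finset.sum_congr rfl fun p _ => ?_
  rw [pderiv_monomial, eval_monomial, Finsupp.prod_fintype _ _ (by simp), Fintype.prod_sum_type,
    mul_assoc (_ * _)]
  simp [diagPt, Finsupp.single_apply]

lemma eval_hField_polar (c : ((Fin n →₀ ℕ) × (Fin n →₀ ℕ)) →₀ ℂ) (F : Fin n → Hol n)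
    (z : Fin n → ℂ) :
    eval (diagPt z) (hField F (polar c)) = ∑ j, eval z (F j) * QDeriv c j z := by
  rw [hField_eq_sum, map_sum]
  refine Finset.sum_congr rfl fun j _ => ?_
  rw [map_mul, eval_pderiv_polar, eval_rename]
  rfl

lemma cj_polar (hreal : ∀ α β : Fin n →₀ ℕ, c (α, β) = (starRingEnd ℂ) (c (β, α))) :
    cj (polar c) = polar c := by
  have hm : ∀ (α β : Fin n →₀ ℕ) (a : ℂ), cj (monomial (α.sumElim β) a : Pol n) =
      monomial (β.sumElim α) ((starRingEnd ℂ) a) := by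
    intro α β a
    have : (α.sumElim β).mapDomain Sum.swap = β.sumElim α := by
      ext i
      rw [mapDomain_swap_apply]
      rcases i with j | j <;> rfl
    simp [cj, rename_monomial, this]
  have hs : ∀ p ∈ c.support, p.swap ∈ c.support := by
    rintro ⟨α, β⟩ hp
    rw [Finsupp.mem_support_iff] at *
    rw [hreal] at hp
    simpa using hp
  rw [polar, Finsupp.sum, map_sum]
  refine Finset.sum_nbij' Prod.swap Prod.swap hs hs (by simp) (by simp) ?_
  rintro ⟨α, β⟩ _
  rw [hm, hreal α β, Complex.conj_conj]
  rfl

lemma mem_support_polar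
    (hhom : ∀ p ∈ c.support, (p.1.sum fun _ e => e) + (p.2.sum fun _ e => e) = d)
    (hnoplh : ∀ p ∈ c.support, p.1 ≠ 0 ∧ p.2 ≠ 0) (m : Fin n ⊕ Fin n →₀ ℕ)
    (hm : m ∈ (polar c).support) : 1 ≤ zdeg m ∧ 1 ≤ adeg m ∧ zdeg m + adeg m = d := by
  classical
  obtain ⟨p, hp, hm⟩ := Finset.mem_biUnion.1 (support_sum hm)
  obtain rfl := Finset.mem_singleton.1 (support_monomial_subset hm)
  have h1 : zdeg (p.1.sumElim p.2) = p.1.degree := by simp [zdeg, Finsupp.degree_eq_sum]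
  have h2 : adeg (p.1.sumElim p.2) = p.2.degree := by simp [adeg, Finsupp.degree_eq_sum]
  have h3 : p.1.degree + p.2.degree = d := hhom p hp
  have h4 : p.1.degree ≠ 0 := fun h => (hnoplh p hp).1 ((Finsupp.degree_eq_zero_iff _).1 h)
  have h5 : p.2.degree ≠ 0 := fun h => (hnoplh p hp).2 ((Finsupp.degree_eq_zero_iff _).1 h)
  omega

lemma eq_zero_of_hField_polar (hnd : HND c) (F : Fin n → Hol n) (hF : hField F (polar c) = 0) :
    F = 0 := by
  have h := (hnd (fun j => rename Fin.castSucc (F j)) 0 ?_).1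
  · funext j
    exact rename_injective _ (Fin.castSucc_injective n) (by rw [h j, Pi.zero_apply, map_zero])
  · intro z u
    have hc : ∀ w : ℂ, (Fin.snoc z w : Fin (n + 1) → ℂ) ∘ Fin.castSucc = z := by
      intro w; ext j; simp
    have := eval_hField_polar c F z
    rw [hF, map_zero] at this
    simp only [eval_rename, hc, ← this, map_zero, zero_div, sub_zero]

lemma reField_polar_eq_zero
    (hreal : ∀ α β : Fin n →₀ ℕ, c (α, β) = (starRingEnd ℂ) (c (β, α))) {F : Fin n → Hol n}
    (h : ∀ z, (∑ j, eval z (F j) * QDeriv c j z).re = 0) : reField F (polar c) = 0 := by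
  rw [reField_apply, ← cj_polar hreal, aField_cj, cj_polar hreal]
  exact add_cj_eq_zero_of_re _ fun z => by rw [eval_hField_polar, h]

lemma isRotationQ_of_reField
    (hreal : ∀ α β : Fin n →₀ ℕ, c (α, β) = (starRingEnd ℂ) (c (β, α)))
    {A : Matrix (Fin n) (Fin n) ℂ} (h : reField (lin A) (polar c) = 0) : IsRotationQ c A := by
  intro z
  have h1 := congrArg (eval (diagPt z)) h
  rw [reField_apply, ← cj_polar hreal, aField_cj, cj_polar hreal, map_add, eval_cj,
    Complex.add_conj, map_zero, eval_hField_polar] at h1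
  have h2 : ∀ j, eval z (lin A j) = ∑ k, A j k * z k := fun j => by simp [lin]
  simp only [h2] at h1
  have := Complex.ofReal_eq_zero.1 h1
  linarith

/-- A polynomial in `z` and `w` whose exponents `(δ, i)` satisfy `|δ| = k i` and `i < N`, expanded
in powers of `w`. -/
lemma exists_eval_snoc_eq_sum (H : MvPolynomial (Fin (n + 1)) ℂ) (N : ℕ) (k : ℕ → ℕ)
    (hH : ∀ m ∈ H.support, m (Fin.last n) < N ∧ ∑ i : Fin n, m i.castSucc = k (m (Fin.last n))) :
    ∃ P : ℕ → Hol n, (∀ i, (P i).IsHomogeneous (k i)) ∧ ∀ z w,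
      eval (Fin.snoc z w) H = ∑ i ∈ Finset.range N, eval z (P i) * w ^ i := by
  classical
  let r : (Fin (n + 1) →₀ ℕ) → (Fin n →₀ ℕ) := fun m =>
    m.comapDomain Fin.castSucc (Fin.castSucc_injective n).injOn
  refine ⟨fun i => ∑ m ∈ H.support with m (Fin.last n) = i, monomial (r m) (coeff m H), ?_, ?_⟩
  · intro i
    refine IsHomogeneous.sum _ _ _ fun m hm => ?_
    obtain ⟨hm', rfl⟩ := Finset.mem_filter.1 hm
    refine isHomogeneous_monomial _ ?_
    rw [← (hH m hm').2, Finsupp.degree_eq_sum]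
    rfl
  · intro z w
    rw [eval_eq', ← Finset.sum_fiberwise_of_maps_to (g := fun m => m (Fin.last n))
      (t := Finset.range N) fun m hm => Finset.mem_range.2 (hH m hm).1]
    refine Finset.sum_congr rfl fun i _ => ?_
    rw [map_sum, Finset.sum_mul]
    refine Finset.sum_congr rfl fun m hm => ?_
    rw [← (Finset.mem_filter.1 hm).2, Fin.prod_univ_castSucc, eval_monomial,
      Finsupp.prod_fintype _ _ (by simp)]
    simp [r, mul_assoc]

lemma eq_zero_of_eval_snoc {H : MvPolynomial (Fin (n + 1)) ℂ}
    (h : ∀ z w, eval (Fin.snoc z w) H = 0) : H = 0 := by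
  refine MvPolynomial.funext fun x => ?_
  rw [← Fin.snoc_init_self x, h, map_zero]

lemma isHomogeneous_reField {F : Fin n → Hol n} {s : ℕ} (hF : ∀ j, (F j).IsHomogeneous s)
    {P : Pol n} (hP : P.IsHomogeneous d) : (reField F P).IsHomogeneous (s + (d - 1)) := by
  have h : ∀ P : Pol n, P.IsHomogeneous d → (hField F P).IsHomogeneous (s + (d - 1)) := by
    intro P hP
    rw [hField_eq_sum]
    exact IsHomogeneous.sum _ _ _ fun j _ => (hF j).rename_isHomogeneous.mul hP.pderiv
  have hcj : ∀ (P : Pol n) (k : ℕ), P.IsHomogeneous k → (cj P).IsHomogeneous k :=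
    fun P k hP => (hP.map (starRingEnd ℂ)).rename_isHomogeneous
  refine (h P hP).add ?_
  change (aField F P).IsHomogeneous _
  rw [← cj_cj P, aField_cj]
  exact hcj _ _ (h _ (hcj _ _ hP))

lemma reField_zero : reField (0 : Fin n → Hol n) = 0 := by
  refine derivation_ext fun i => ?_
  rcases i with j | j
  · simp [reField_X_inl]
  · simp [reField_X_inr]

lemma reField_add (F G : Fin n → Hol n) : reField (F + G) = reField F + reField G := by
  refine derivation_ext fun i => ?_
  rcases i with j | j
  · simp [reField_X_inl]
  · simp [reField_X_inr]

lemma reField_homogeneousComponent {f : Fin n → Hol n} {Q : Pol n} (hQ : Q.IsHomogeneous d)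
    (h : reField f Q = 0) (s : ℕ) : reField (fun j => homogeneousComponent s (f j)) Q = 0 := by
  let φ : (Fin n → Hol n) →+ Pol n :=
    { toFun := fun F => reField F Q
      map_zero' := by rw [reField_zero, Derivation.zero_apply]
      map_add' := fun F G => by rw [reField_add, Derivation.add_apply] }
  let N := max (s + 1) ((Finset.univ.sup fun j => (f j).totalDegree) + 1)
  have hsum : f = ∑ t ∈ Finset.range N, fun j => homogeneousComponent t (f j) := by
    funext j
    rw [Finset.sum_apply]
    conv_lhs => rw [← sum_homogeneousComponent (f j)]
    refine Finset.sum_subset ?_ fun t _ ht => ?_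
    · have : (f j).totalDegree ≤ Finset.univ.sup fun j => (f j).totalDegree :=
        Finset.le_sup (f := fun j => (f j).totalDegree) (Finset.mem_univ j)
      exact Finset.range_subset_range.2 (le_max_of_le_right (by omega))
    · refine homogeneousComponent_eq_zero _ _ ?_
      simpa using ht
  have h1 : φ f = ∑ t ∈ Finset.range N, φ fun j => homogeneousComponent t (f j) := by
    conv_lhs => rw [hsum]
    exact map_sum φ _ _
  have h2 : ∀ t, (φ fun j => homogeneousComponent t (f j)).IsHomogeneous (t + (d - 1)) :=
    fun t => isHomogeneous_reField (fun j => homogeneousComponent_isHomogeneous _ _) hQ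
  have h3 := congrArg (homogeneousComponent (s + (d - 1))) h1
  rw [show φ f = 0 from h, map_zero, map_sum, Finset.sum_eq_single s] at h3
  · rw [homogeneousComponent_of_mem (h2 s), if_pos rfl] at h3
    exact h3.symm
  · intro t _ ht
    rw [homogeneousComponent_of_mem (h2 t), if_neg (by omega)]
  · intro hs
    exact absurd (Finset.mem_range.2 (lt_of_lt_of_le (Nat.lt_succ_self s) (le_max_left _ _))) hs

end Polar

end CRModel

open MvPolynomial CRModel

/-- If `M_Q` is holomorphically nondegenerate, `g₁ ≠ {0}` and `M_Q`
admits no nonzero real diagonal rotation, then `g_c = {0}`: every rigid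
infinitesimal CR automorphism `Σ f_j(z) ∂/∂z_j`, all of whose monomials have degree
between `2` and `d`, is zero. -/
theorem stmt5 (n d : ℕ) (hd : 2 ≤ d)
    (c : ((Fin n →₀ ℕ) × (Fin n →₀ ℕ)) →₀ ℂ)
    (hreal : ∀ α β : Fin n →₀ ℕ, c (α, β) = (starRingEnd ℂ) (c (β, α)))
    (hhom : ∀ p ∈ c.support, (p.1.sum fun _ e => e) + (p.2.sum fun _ e => e) = d)
    (hnoplh : ∀ p ∈ c.support, p.1 ≠ 0 ∧ p.2 ≠ 0)
    (hnd : HND c)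
    (hg1 : ∃ Xf ∈ gwQ n d c 1, Xf ≠ 0)
    (hnorot : ∀ A : Matrix (Fin n) (Fin n) ℂ, IsRotationQ c A → ReDiag A → A = 0) :
    ∀ f : Fin n → MvPolynomial (Fin n) ℂ,
      (∀ j, ∀ m ∈ (f j).support, 2 ≤ (m.sum fun _ e => e) ∧ (m.sum fun _ e => e) ≤ d) →
      (∀ z : Fin n → ℂ, (∑ j, MvPolynomial.eval z (f j) * QDeriv c j z).re = 0) →
      f = 0 := by
  intro f hf hfQ
  have hQ := mem_support_polar hhom hnoplh
  have hQr := cj_polar hreal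
  have hnd' := eq_zero_of_hField_polar hnd
  have hrot : ∀ A, reField (lin A) (polar c) = 0 → ReDiag A → A = 0 :=
    fun A h => hnorot A (isRotationQ_of_reField hreal h)
  obtain ⟨⟨F, G⟩, ⟨hX, hF, hG⟩, hne⟩ := hg1
  have hdQ : (d : ℚ) ≠ 0 := by positivity
  have hF' : ∀ j, ∀ m ∈ (F j).support, m (Fin.last n) < 2 ∧
      ∑ i : Fin n, m i.castSucc = d + 1 - d * m (Fin.last n) := by
    intro j m hm
    have h := hF j m hm
    rw [wZ] at h
    field_simp at h
    have h' : ∑ i : Fin n, m i.castSucc + d * m (Fin.last n) = d + 1 := by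
      have : ((∑ i : Fin n, m i.castSucc + d * m (Fin.last n) : ℕ) : ℚ) = (d + 1 : ℕ) := by
        push_cast
        linarith
      exact_mod_cast this
    refine ⟨?_, by omega⟩
    by_contra! h2
    have := Nat.mul_le_mul_left d h2
    omega
  have hG' : ∀ m ∈ G.support, m (Fin.last n) < 3 ∧
      ∑ i : Fin n, m i.castSucc = 2 * d - d * m (Fin.last n) := by
    intro m hm
    have h := hG m hm
    rw [wW] at h
    field_simp at h
    have h' : ∑ i : Fin n, m i.castSucc + d * m (Fin.last n) = 2 * d := by
      have : ((∑ i : Fin n, m i.castSucc + d * m (Fin.last n) : ℕ) : ℚ) = (2 * d : ℕ) := by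
        push_cast
        linarith
      exact_mod_cast this
    refine ⟨?_, by omega⟩
    by_contra! h2
    have := Nat.mul_le_mul_left d h2
    omega
  choose P hP hPe using fun j => exists_eval_snoc_eq_sum (F j) 2 (fun i => d + 1 - d * i) (hF' j)
  obtain ⟨g, hg, hge⟩ := exists_eval_snoc_eq_sum G 3 (fun i => 2 * d - d * i) hG'
  have hl : ∀ j, (P j 1).IsHomogeneous 1 := fun j => by simpa using hP j 1
  have hp : ∀ j, (P j 0).IsHomogeneous (d + 1) := fun j => by simpa using hP j 0
  obtain ⟨a, g0, g1, g2, hlQ, hpQ⟩ := weight_one_equations (by omega) hQ hQr hl hp hg (by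
    rintro u K rfl
    refine add_cj_eq_zero_of_re _ fun z => ?_
    rw [← hX z u]
    congr 1
    have hr : ∀ q : Hol n, eval (diagPt z) (rename Sum.inl q) = eval z q := by
      intro q
      rw [eval_rename]
      rfl
    simp only [hPe, hge, Finset.sum_range_succ, Finset.sum_range_zero, zero_add, pow_zero, mul_one,
      pow_one, map_add, map_sub, map_mul, map_pow, eval_C, eval_polar, eval_hField_polar, hr,
      add_mul, Finset.sum_add_distrib]
    have hs : ∑ j, eval z (P j 1) * (u + I * QEval c z) * QDeriv c j z =
        (u + I * QEval c z) * ∑ j, eval z (P j 1) * QDeriv c j z := by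
      rw [Finset.mul_sum]
      exact Finset.sum_congr rfl fun j _ => by ring
    rw [hs, div_eq_mul_inv _ (2 * I), show (2 * I)⁻¹ = -I / 2 by rw [mul_inv, inv_I]; ring]
    ring)
  have hne' : ¬ (a = 0 ∧ (fun j => P j 1) = 0 ∧ (fun j => P j 0) = 0) := by
    rintro ⟨rfl, h1, h0⟩
    refine hne (Prod.ext (funext fun j => eq_zero_of_eval_snoc fun z w => ?_)
      (eq_zero_of_eval_snoc fun z w => ?_))
    · have h1' : P j 1 = 0 := congrFun h1 j
      have h0' : P j 0 = 0 := congrFun h0 j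
      simp [hPe, Finset.sum_range_succ, h1', h0']
    · simp [hge, Finset.sum_range_succ, g0, g1, g2]
  have hfQ' := reField_polar_eq_zero hreal hfQ
  have hcomp : ∀ s j, homogeneousComponent s (f j) = 0 := by
    intro s j
    by_cases hs : 2 ≤ s
    · exact congrFun (eq_zero_of_weight_one hd hQ hnd' hrot hl hp hlQ hpQ hne' hs
        (fun j => homogeneousComponent_isHomogeneous s (f j))
        (reField_homogeneousComponent (isHomogeneous_of_mem_support hQ) hfQ' s)) j
    · refine homogeneousComponent_eq_zero' _ _ fun m hm h => hs ?_
      rw [← h]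
      exact (hf j m hm).1
  funext j
  rw [← sum_homogeneousComponent (f j)]
  exact Finset.sum_eq_zero fun s _ => hcomp s j
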